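/- arXiv:2208.08899 — 11 statements merged into one kernel-verified Lean document; each statement's English description precedes it below -/
import Mathlib

section
/- Let U : ℕ → ℤ be any sequence of integers satisfying the Fibonacci recurrence U_{n+2} = U_{n+1} + U_n for all n. Then for every prime number p: (i) if p ≡ 1 or 4 (mod 5) then U_p ≡ U_1 (mod p); (ii) if p ≡ 2 or 3 (mod 5) then U_p ≡ U_0 − U_1 (mod p); (iii) U_5 = 3·U_0 + 5·U_1, so in particular U_5 ≡ 3·U_0 (mod 5). -/
/-- In characteristic `p` (large enough field) there is a root of the fifth cyclotomic polynomial. -/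
theorem exists_zeta (K : Type*) [Field K] [IsAlgClosed K] :
    ∃ z : K, z ^ 4 + z ^ 3 + z ^ 2 + z + 1 = 0 := by
  obtain ⟨z, hz⟩ := IsAlgClosed.exists_root
    (Polynomial.X ^ 4 + Polynomial.X ^ 3 + Polynomial.X ^ 2 + Polynomial.X + 1 : Polynomial K)
    (by
      have : (Polynomial.X ^ 4 + Polynomial.X ^ 3 + Polynomial.X ^ 2 + Polynomial.X + 1 :
        Polynomial K).degree = 4 := by compute_degree!
      rw [this]; decide)
  exact ⟨z, by simpa [Polynomial.IsRoot] using hz⟩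

theorem binet {K : Type*} [Field K] (V : ℕ → K) (hV : ∀ n, V (n + 2) = V (n + 1) + V n)
    (a b : K) (hs : a + b = 1) (hm : a * b = -1) (n : ℕ) :
    V (n + 1) - a * V n = b ^ n * (V 1 - a * V 0) := by
  induction n with
  | zero => simp
  | succ k ih =>
    rw [hV k, pow_succ]
    linear_combination b * ih + (-V (k + 1)) * hs + V k * hm

theorem fib_char_p (p : ℕ) [Fact p.Prime] (K : Type*) [Field K] [IsAlgClosed K] [CharP K p]
    (V : ℕ → K) (hV : ∀ n, V (n + 2) = V (n + 1) + V n) :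
    ((p % 5 = 1 ∨ p % 5 = 4) → V p = V 1) ∧
    ((p % 5 = 2 ∨ p % 5 = 3) → V p = V 0 - V 1) := by
  obtain ⟨z, hz⟩ := exists_zeta K
  have h5 : z ^ 5 = 1 := by linear_combination (z - 1) * hz
  obtain ⟨a, ha⟩ : ∃ a, a = -(z + z ^ 4) := ⟨_, rfl⟩
  obtain ⟨b, hb⟩ : ∃ b, b = -(z ^ 2 + z ^ 3) := ⟨_, rfl⟩
  have hs : a + b = 1 := by rw [ha, hb]; linear_combination -hz
  have hm : a * b = -1 := by
    rw [ha, hb]; linear_combination hz + (z + z ^ 2) * h5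
  have B1 := binet V hV a b hs hm p
  have B2 := binet V hV b a (by rw [add_comm, hs]) (by rw [mul_comm, hm]) p
  have hd : p % 5 ≠ 0 → b - a ≠ 0 := by
    intro h h0
    have : ((5 : ℕ) : K) = 0 := by
      push_cast
      linear_combination (b - a) * h0 - (a + b + 1) * hs + 4 * hm
    rw [CharP.cast_eq_zero_iff K p] at this
    have := (Nat.prime_dvd_prime_iff_eq Fact.out (by norm_num : Nat.Prime 5)).1 this
    omega
  have hzp : z ^ p = z ^ (p % 5) := by
    conv_lhs => rw [← Nat.mod_add_div p 5, pow_add, pow_mul, h5, one_pow, mul_one]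
  have hap : a ^ p = -(z ^ (p % 5) + (z ^ (p % 5)) ^ 4) := by
    rw [← frobenius_def p a, ha]
    simp only [map_neg, map_add, map_pow, frobenius_def, hzp]
  have hbp : b ^ p = -((z ^ (p % 5)) ^ 2 + (z ^ (p % 5)) ^ 3) := by
    rw [← frobenius_def p b, hb]
    simp only [map_neg, map_add, map_pow, frobenius_def, hzp]
  constructor
  · intro h
    have e : a ^ p = a ∧ b ^ p = b := by
      rw [hap, hbp, ha, hb]
      rcases h with h | h <;> rw [h] <;> constructor
      · ring
      · ring
      · linear_combination (-(z + z ^ 6 + z ^ 11)) * h5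
      · linear_combination (-(z ^ 3 + z ^ 2 + z ^ 7)) * h5
    rw [e.2] at B1
    rw [e.1] at B2
    apply mul_left_cancel₀ (hd (by omega))
    linear_combination B1 - B2
  · intro h
    have e : a ^ p = b ∧ b ^ p = a := by
      rw [hap, hbp, ha, hb]
      rcases h with h | h <;> rw [h] <;> constructor
      · linear_combination (-(z ^ 3)) * h5
      · linear_combination (-z) * h5
      · linear_combination (-(z ^ 2 + z ^ 7)) * h5
      · linear_combination (-(z + z ^ 4)) * h5
    rw [e.2] at B1
    rw [e.1] at B2
    apply mul_left_cancel₀ (hd (by omega))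
    linear_combination B1 - B2 + (b - a) * V 0 * hs

/-- **Theorem 1 (Fibonacci-type congruences).**
Let `U : ℕ → ℤ` satisfy `U (n+2) = U (n+1) + U n` for all `n`. Then for every prime `p`:
(i) if `p ≡ 1` or `4 (mod 5)` then `U p ≡ U 1 (mod p)`;
(ii) if `p ≡ 2` or `3 (mod 5)` then `U p ≡ U 0 - U 1 (mod p)`;
(iii) `U 5 = 3 * U 0 + 5 * U 1`, hence `U 5 ≡ 3 * U 0 (mod 5)`. -/
theorem fibonacci_type_congruences (U : ℕ → ℤ)
    (hU : ∀ n : ℕ, U (n + 2) = U (n + 1) + U n) :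
    (∀ p : ℕ, p.Prime →
      ((p % 5 = 1 ∨ p % 5 = 4) → U p ≡ U 1 [ZMOD (p : ℤ)]) ∧
      ((p % 5 = 2 ∨ p % 5 = 3) → U p ≡ U 0 - U 1 [ZMOD (p : ℤ)])) ∧
    U 5 = 3 * U 0 + 5 * U 1 ∧ U 5 ≡ 3 * U 0 [ZMOD (5 : ℤ)] := by
  refine ⟨fun p hp => ?_, ?_, ?_⟩
  · haveI : Fact p.Prime := ⟨hp⟩
    haveI : CharP (AlgebraicClosure (ZMod p)) p :=
      charP_of_injective_algebraMap (algebraMap (ZMod p) _).injective p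
    have key := fib_char_p p (AlgebraicClosure (ZMod p)) (fun n => (U n : AlgebraicClosure (ZMod p)))
      (fun n => by simp only [hU n]; push_cast; rfl)
    refine ⟨fun h => ?_, fun h => ?_⟩
    · exact (CharP.intCast_eq_intCast (AlgebraicClosure (ZMod p)) p).1 (key.1 h)
    · exact (CharP.intCast_eq_intCast (AlgebraicClosure (ZMod p)) p).1
        (by push_cast; exact key.2 h)
  · have h0 := hU 0
    have h1 := hU 1
    have h2 := hU 2
    have h3 := hU 3
    norm_num at h0 h1 h2 h3
    linarith
  · have h0 := hU 0
    have h1 := hU 1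
    have h2 := hU 2
    have h3 := hU 3
    norm_num at h0 h1 h2 h3
    unfold Int.ModEq
    omega
end

section
/- Let A be a commutative ring and C ∈ A[X] a monic polynomial of degree d ≥ 2, C = ∑_{k=0}^{d} c_k X^k with c_d = 1. For n ∈ ℕ let R_n be the remainder of the division of X^n by C. Then: (1) the sequence (R_n) in A[X] is of class C, i.e. ∑_{k=0}^{d} c_k R_{n+k} = 0 for all n; (2) for every sequence U : ℕ → A of class C and every n ∈ ℕ, U_n = ∑_{k=0}^{d−1} (coefficient of X^k in R_n) · U_k. -/
open Polynomial

/-- **Proposition 5.** Let `A` be a commutative ring and `C ∈ A[X]` monic of degree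
`d ≥ 2`.  Writing `R n` for the remainder of the euclidean division of `X^n` by `C`:
(1) the sequence of remainders is of class `C`, i.e. `∑_{k=0}^{d} c_k R_{n+k} = 0`;
(2) every sequence `U : ℕ → A` of class `C` satisfies `U n = ∑_{k<d} (R n).coeff k * U k`. -/
theorem remainders_of_class_C_and_linear_formula
    {A : Type*} [CommRing A] (d : ℕ) (hd : 2 ≤ d)
    (C : Polynomial A) (hC : C.Monic) (hdeg : C.natDegree = d) :
    (∀ n : ℕ,
      ∑ k ∈ Finset.range (d + 1), Polynomial.C (C.coeff k) * (X ^ (n + k) %ₘ C) = 0) ∧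
    (∀ U : ℕ → A,
      (∀ n : ℕ, ∑ k ∈ Finset.range (d + 1), C.coeff k * U (n + k) = 0) →
      ∀ n : ℕ, U n = ∑ k ∈ Finset.range d, (X ^ n %ₘ C).coeff k * U k) := by
  have h1 : ∀ n : ℕ,
      ∑ k ∈ Finset.range (d + 1), Polynomial.C (C.coeff k) * (X ^ (n + k) %ₘ C) = 0 := by
    intro n
    have h : ∑ k ∈ Finset.range (d + 1), Polynomial.C (C.coeff k) * (X : A[X]) ^ (n + k)
        = C * X ^ n := by
      conv_rhs => rw [C.as_sum_range_C_mul_X_pow, hdeg, Finset.sum_mul]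
      exact Finset.sum_congr rfl fun k _ => by ring
    have h2 := congrArg (Polynomial.modByMonicHom C) h
    rw [map_sum] at h2
    have h3 : Polynomial.modByMonicHom C (C * X ^ n) = 0 :=
      (Polynomial.modByMonic_eq_zero_iff_dvd hC).2 (dvd_mul_right _ _)
    rw [h3] at h2
    rw [← h2]
    refine Finset.sum_congr rfl fun k _ => ?_
    rw [← Polynomial.smul_eq_C_mul, ← Polynomial.smul_eq_C_mul, map_smul]
    rfl
  refine ⟨h1, fun U hU n => ?_⟩
  nontriviality A
  have hV : ∀ n : ℕ, ∑ j ∈ Finset.range (d + 1), C.coeff j *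
      (∑ k ∈ Finset.range d, (X ^ (n + j) %ₘ C).coeff k * U k) = 0 := by
    intro n
    simp_rw [Finset.mul_sum]
    rw [Finset.sum_comm]
    refine Finset.sum_eq_zero fun k _ => ?_
    have h := congrArg (fun p => p.coeff k * U k) (h1 n)
    simp only [Polynomial.finset_sum_coeff, Polynomial.coeff_C_mul, Polynomial.coeff_zero,
      zero_mul, Finset.sum_mul] at h
    rw [← h]
    exact Finset.sum_congr rfl fun j _ => by ring
  have hlead : C.coeff d = 1 := by rw [← hdeg]; exact hC
  induction n using Nat.strong_induction_on with
  | _ n ih =>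
    by_cases hn : n < d
    · have h : (X : A[X]) ^ n %ₘ C = X ^ n := by
        rw [Polynomial.modByMonic_eq_self_iff hC, Polynomial.degree_X_pow,
          Polynomial.degree_eq_natDegree hC.ne_zero, hdeg]
        exact_mod_cast hn
      rw [h]
      simp [Polynomial.coeff_X_pow, hn]
    · obtain ⟨m, rfl⟩ := Nat.exists_eq_add_of_le' (not_lt.1 hn)
      have a := hU m
      have b := hV m
      rw [Finset.sum_range_succ, hlead, one_mul] at a b
      have e : ∑ j ∈ Finset.range d, C.coeff j * U (m + j) = ∑ j ∈ Finset.range d, C.coeff j *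
          (∑ k ∈ Finset.range d, (X ^ (m + j) %ₘ C).coeff k * U k) := by
        refine Finset.sum_congr rfl fun j hj => ?_
        rw [← ih (m + j) (by have := Finset.mem_range.1 hj; omega)]
      rw [e] at a
      exact add_left_cancel (a.trans b.symm)
end

section
/- With the number-field setup below, let λ_1,…,λ_d ∈ E and suppose the sequence U_n := λ_1 x_1^n + ⋯ + λ_d x_d^n lies in A for all n ∈ ℕ. Then each product Δ_C·λ_i lies in B. Moreover, if Q is a prime ideal of B, P := Q ∩ A, p := |A/P|, and σ ∈ Gal(E/K) satisfies σ(x) ≡ x^p (mod Q) for all x ∈ B, then Δ_C·U_p ≡ Δ_C·(λ_1 σ(x_1) + ⋯ + λ_d σ(x_d)) (mod Q), i.e. Δ_C·U_p − Δ_C·∑_i λ_i σ(x_i) ∈ Q. -/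
open Polynomial NumberField

/-- **Lemma 9 (with the integrality of the `λᵢ`).**  Set-up: `E/K` is a Galois extension of
number fields, `A = 𝓞 K`, `B = 𝓞 E`; `C ∈ A[X]` is monic of degree `d ≥ 2` with pairwise
distinct roots `x₁, …, x_d ∈ B` generating `E` over `K`; `Δ = ∏_{i<j} (xᵢ - xⱼ)² ∈ A`.
If `λ₁, …, λ_d ∈ E` are such that `U n = ∑ᵢ λᵢ xᵢⁿ` lies in `A` for all `n`, then each
`Δ·λᵢ` lies in `B`; moreover, if `Q` is a prime of `B`, `P = Q ∩ A`, `p = |A/P|`, and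
`σ ∈ Gal(E/K)` satisfies `σ(x) ≡ x^p (mod Q)` for all `x ∈ B`, then
`Δ·U_p ≡ Δ·∑ᵢ λᵢ σ(xᵢ) (mod Q)`. -/
theorem deltaLambda_integral_and_frobenius_congruence
    {K E : Type*} [Field K] [NumberField K] [Field E] [NumberField E]
    [Algebra K E] [IsGalois K E]
    (d : ℕ) (hd : 2 ≤ d)
    (C : Polynomial (𝓞 K)) (hC : C.Monic) (hdeg : C.natDegree = d)
    (x : Fin d → 𝓞 E) (hxinj : Function.Injective x)
    (hsplit : C.map (algebraMap (𝓞 K) (𝓞 E)) = ∏ i, (X - Polynomial.C (x i)))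
    (hgen : IntermediateField.adjoin K
      (Set.range fun i => (algebraMap (𝓞 E) E (x i))) = ⊤)
    (Δ : 𝓞 K)
    (hΔ : algebraMap (𝓞 K) (𝓞 E) Δ =
      ∏ q ∈ Finset.univ.filter (fun q : Fin d × Fin d => q.1 < q.2), (x q.1 - x q.2) ^ 2)
    (lam : Fin d → E) (U : ℕ → 𝓞 K)
    (hUdef : ∀ n : ℕ,
      algebraMap (𝓞 K) E (U n) = ∑ i, lam i * (algebraMap (𝓞 E) E (x i)) ^ n) :
    (∀ i, ∃ b : 𝓞 E, algebraMap (𝓞 E) E b = algebraMap (𝓞 K) E Δ * lam i) ∧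
    (∀ (Q : Ideal (𝓞 E)), Q.IsPrime → Q ≠ ⊥ →
      ∀ σ : E ≃ₐ[K] E,
        (∀ b : 𝓞 E, ∃ q ∈ Q, algebraMap (𝓞 E) E q =
          σ (algebraMap (𝓞 E) E b) -
            (algebraMap (𝓞 E) E b) ^
              (Nat.card (𝓞 K ⧸ Ideal.comap (algebraMap (𝓞 K) (𝓞 E)) Q))) →
        ∃ q ∈ Q, algebraMap (𝓞 E) E q =
          algebraMap (𝓞 K) E Δ *
              algebraMap (𝓞 K) E
                (U (Nat.card (𝓞 K ⧸ Ideal.comap (algebraMap (𝓞 K) (𝓞 E)) Q))) -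
            algebraMap (𝓞 K) E Δ *
              ∑ i, lam i * σ (algebraMap (𝓞 E) E (x i))) := by
  have key : algebraMap (𝓞 K) (𝓞 E) Δ = (Matrix.vandermonde x).det ^ 2 := by
    rw [hΔ, Matrix.det_vandermonde, Finset.prod_filter, Fintype.prod_prod_type,
      ← Finset.prod_pow]
    refine Finset.prod_congr rfl fun i _ => ?_
    rw [← Finset.prod_filter, ← Finset.prod_pow]
    refine Finset.prod_congr (by ext j; simp) fun j _ => ?_
    ring
  have hΔE : algebraMap (𝓞 K) E Δ = algebraMap (𝓞 E) E (algebraMap (𝓞 K) (𝓞 E) Δ) :=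
    IsScalarTower.algebraMap_apply (𝓞 K) (𝓞 E) E Δ
  have hUE : ∀ n, algebraMap (𝓞 K) E (U n) =
      algebraMap (𝓞 E) E (algebraMap (𝓞 K) (𝓞 E) (U n)) := fun n =>
    IsScalarTower.algebraMap_apply (𝓞 K) (𝓞 E) E (U n)
  have h1 : ∀ i, ∃ b : 𝓞 E, algebraMap (𝓞 E) E b = algebraMap (𝓞 K) E Δ * lam i := by
    intro i
    let V : Matrix (Fin d) (Fin d) (𝓞 E) := Matrix.vandermonde x
    let u : Fin d → 𝓞 E := fun n => algebraMap (𝓞 K) (𝓞 E) (U n)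
    let W : Matrix (Fin d) (Fin d) E := V.map (algebraMap (𝓞 E) E)
    have hu : Matrix.vecMul lam W = fun n => algebraMap (𝓞 E) E (u n) := by
      funext n
      simp only [u, ← hUE, hUdef]
      simp [Matrix.vecMul, dotProduct, W, V, Matrix.vandermonde_apply]
    have hdet : W.det = algebraMap (𝓞 E) E V.det :=
      ((algebraMap (𝓞 E) E).map_det V).symm
    have hadj : W.adjugate = V.adjugate.map (algebraMap (𝓞 E) E) :=
      ((algebraMap (𝓞 E) E).map_adjugate V).symm
    have h2 : W.det * lam i = algebraMap (𝓞 E) E (Matrix.vecMul u V.adjugate i) := by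
      have h3 : Matrix.vecMul (Matrix.vecMul lam W) W.adjugate i = W.det * lam i := by
        rw [Matrix.vecMul_vecMul, Matrix.mul_adjugate, Matrix.vecMul_smul, Matrix.vecMul_one]
        simp
      rw [← h3, hu, hadj]
      simp [Matrix.vecMul, dotProduct]
    refine ⟨V.det * Matrix.vecMul u V.adjugate i, ?_⟩
    rw [map_mul, ← h2, hΔE, key, map_pow, hdet]
    ring
  refine ⟨h1, ?_⟩
  intro Q _ _ σ hσ
  choose b hb using h1
  choose q hqQ hq using fun i => hσ (x i)
  refine ⟨-∑ i, b i * q i, Q.neg_mem (Q.sum_mem fun i _ => Q.mul_mem_left _ (hqQ i)), ?_⟩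
  rw [hUdef, Finset.mul_sum, Finset.mul_sum, ← Finset.sum_sub_distrib, map_neg, map_sum,
    ← Finset.sum_neg_distrib]
  refine Finset.sum_congr rfl fun i _ => ?_
  rw [map_mul, hb, hq]
  ring
end

section
/- Let E/K be a Galois extension of fields and C ∈ K[X] a monic polynomial of degree d ≥ 2 with d pairwise distinct roots x₁,…,x_d in E generating E over K. For σ ∈ Gal(E/K) let Ψ_σ ∈ E[X] be the unique polynomial of degree ≤ d−1 with Ψ_σ(x_i) = σ(x_i) for all i. Then: (1) the map σ ↦ Ψ_σ from Gal(E/K) to E[X] is injective; (2) for all θ, σ ∈ Gal(E/K), applying θ to the coefficients of Ψ_σ yields Ψ_{θσθ⁻¹}, i.e. θ(Ψ_σ) = Ψ_{θσθ⁻¹}; (3) Ψ_σ has all its coefficients in K if and only if σ lies in the center of Gal(E/K). -/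
open Polynomial

/-- **Lemma 14.**  Let `E/K` be a Galois extension of fields and `C ∈ K[X]` monic of degree
`d ≥ 2`, with `d` pairwise distinct roots `x₁,…,x_d` in `E` generating `E` over `K`.
For `σ ∈ Gal(E/K)` let `Ψ_σ ∈ E[X]` be the unique polynomial of degree `≤ d-1` with
`Ψ_σ(xᵢ) = σ(xᵢ)`.  Then (1) `σ ↦ Ψ_σ` is injective; (2) applying `θ` to the coefficients
of `Ψ_σ` gives `Ψ_{θσθ⁻¹}`; (3) `Ψ_σ` has all coefficients in `K` iff `σ` is in the center
of `Gal(E/K)`. -/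
theorem root_permuting_polynomials_injective_equivariant_center
    {K E : Type*} [Field K] [Field E] [Algebra K E] [IsGalois K E]
    (d : ℕ) (hd : 2 ≤ d)
    (C : Polynomial K) (hC : C.Monic) (hdeg : C.natDegree = d)
    (x : Fin d → E) (hxinj : Function.Injective x)
    (hsplit : C.map (algebraMap K E) = ∏ i, (X - Polynomial.C (x i)))
    (hgen : IntermediateField.adjoin K (Set.range x) = ⊤)
    (Ψ : (E ≃ₐ[K] E) → Polynomial E)
    (hΨdeg : ∀ σ : E ≃ₐ[K] E, (Ψ σ).degree < d)
    (hΨeval : ∀ (σ : E ≃ₐ[K] E) (i : Fin d), (Ψ σ).eval (x i) = σ (x i)) :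
    Function.Injective Ψ ∧
    (∀ θ σ : E ≃ₐ[K] E,
      (Ψ σ).map (θ : E →+* E) = Ψ (θ * σ * θ⁻¹)) ∧
    (∀ σ : E ≃ₐ[K] E,
      (∀ k : ℕ, (Ψ σ).coeff k ∈ (algebraMap K E).range) ↔
        σ ∈ Subgroup.center (E ≃ₐ[K] E)) := by
  have hext : ∀ σ τ : E ≃ₐ[K] E, (∀ i, σ (x i) = τ (x i)) → σ = τ := by
    intro σ τ h
    ext y
    have hy : y ∈ IntermediateField.adjoin K (Set.range x) := by rw [hgen]; trivial
    induction hy using IntermediateField.adjoin_induction with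
    | mem z hz => obtain ⟨i, rfl⟩ := hz; exact h i
    | algebraMap z => simp
    | add a b _ _ ha hb => simp [ha, hb]
    | inv a _ ha => simp [ha]
    | mul a b _ _ ha hb => simp [ha, hb]
  have hinj : Function.Injective Ψ := by
    intro σ τ h
    apply hext
    intro i
    rw [← hΨeval, ← hΨeval, h]
  have hperm : ∀ (θ : E ≃ₐ[K] E) (i : Fin d), ∃ j, θ (x i) = x j := by
    intro θ i
    have h0 : ∀ y : E, aeval y C = ∏ j, (y - x j) := by
      intro y
      rw [← eval_map_algebraMap, hsplit, eval_prod]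
      simp
    have h1 : aeval (x i) C = 0 := by
      rw [h0]
      exact Finset.prod_eq_zero (Finset.mem_univ i) (sub_self _)
    have h2 : aeval (θ (x i)) C = 0 := by
      rw [aeval_algHom_apply, h1, map_zero]
    rw [h0, Finset.prod_eq_zero_iff] at h2
    obtain ⟨j, _, hj⟩ := h2
    exact ⟨j, sub_eq_zero.mp hj⟩
  have hequi : ∀ θ σ : E ≃ₐ[K] E,
      (Ψ σ).map (θ : E →+* E) = Ψ (θ * σ * θ⁻¹) := by
    intro θ σ
    apply Polynomial.eq_of_degrees_lt_of_eval_index_eq (s := Finset.univ) (v := x)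
      (hxinj.injOn)
    · simpa using hΨdeg σ
    · simpa using hΨdeg (θ * σ * θ⁻¹)
    · intro i _
      obtain ⟨j, hj⟩ := hperm θ⁻¹ i
      have hi : x i = (θ : E →+* E) (x j) := by
        rw [← hj]
        exact (AlgEquiv.apply_symm_apply θ (x i)).symm
      rw [hΨeval, AlgEquiv.mul_apply, AlgEquiv.mul_apply, hj, hi, eval_map_apply, hΨeval]
      rfl
  refine ⟨hinj, hequi, fun σ => ?_⟩
  rw [Subgroup.mem_center_iff]
  constructor
  · intro h θ
    have h1 : Ψ (θ * σ * θ⁻¹) = Ψ σ := by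
      rw [← hequi]
      ext k
      obtain ⟨a, ha⟩ := h k
      rw [coeff_map, ← ha]
      exact θ.commutes a
    exact mul_inv_eq_iff_eq_mul.mp (hinj h1)
  · intro h k
    rw [RingHom.mem_range]
    have : ∀ θ : E ≃ₐ[K] E, θ ((Ψ σ).coeff k) = (Ψ σ).coeff k := by
      intro θ
      have h1 := hequi θ σ
      rw [h θ, mul_inv_cancel_right] at h1
      have h2 := congrArg (fun p => p.coeff k) h1
      simpa using h2
    exact (InfiniteGalois.mem_range_algebraMap_iff_fixed _).mpr this
end

section
/- With the number-field setup below, let σ be an element of the center of Gal(E/K), let Q be a prime ideal of B, P := Q ∩ A, p := |A/P|, and assume σ(x) ≡ x^p (mod Q) for all x ∈ B. Write Ψ_σ = ∑_{k=0}^{d−1} Ψ_k(σ) X^k. Then each Δ_C·Ψ_k(σ) lies in A, and for every sequence U : ℕ → A of class C one has the congruence in A: Δ_C·U_p ≡ ∑_{k=0}^{d−1} Δ_C·Ψ_k(σ)·U_k (mod P). -/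
open Polynomial NumberField

lemma cfc_degree {R : Type*} [CommRing R] (a : R) (f : Polynomial R) :
    (Polynomial.C a * f).degree ≤ f.degree := by
  rw [← Polynomial.smul_eq_C_mul]
  exact Polynomial.degree_smul_le _ _

/-- Lagrange interpolation of the values `Δ * b i` with coefficients in the ideal `I`. -/
lemma cfc_interp {B : Type*} [CommRing B] [IsDomain B] (d : ℕ) (hd : 2 ≤ d) (x : Fin d → B)
    (I : Ideal B) (b : Fin d → B) (hb : ∀ i, b i ∈ I) :
    ∃ G : Polynomial B, G.degree < d ∧ (∀ k, G.coeff k ∈ I) ∧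
      ∀ i, G.eval (x i) =
        (∏ q ∈ Finset.univ.filter (fun q : Fin d × Fin d => q.1 < q.2), (x q.1 - x q.2) ^ 2)
          * b i := by
  classical
  set D := ∏ q ∈ Finset.univ.filter (fun q : Fin d × Fin d => q.1 < q.2), (x q.1 - x q.2) ^ 2
    with hD
  have hdvd : ∀ i, (∏ j ∈ Finset.univ.erase i, (x i - x j)) ∣ D := by
    intro i
    set f : Fin d → Fin d × Fin d := fun j => if i < j then (i, j) else (j, i) with hf
    have hinj : Set.InjOn f (Finset.univ.erase i : Finset (Fin d)) := by
      intro j hj k hk h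
      simp only [hf] at h
      simp at hj hk
      split_ifs at h <;> simp_all
    have h1 : (∏ j ∈ Finset.univ.erase i, (x i - x j)) ∣
        ∏ j ∈ Finset.univ.erase i, (x (f j).1 - x (f j).2) ^ 2 := by
      apply Finset.prod_dvd_prod_of_dvd
      intro j hj
      by_cases h : i < j
      · simp only [hf, h, if_true]
        exact dvd_pow_self _ two_ne_zero
      · simp only [hf, h, if_false]
        exact ⟨x i - x j, by ring⟩
    refine h1.trans ?_
    rw [← Finset.prod_image (g := f) (f := fun q => (x q.1 - x q.2) ^ 2) hinj]
    apply Finset.prod_dvd_prod_of_subset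
    intro q hq
    simp only [Finset.mem_image, Finset.mem_erase, Finset.mem_univ, and_true] at hq
    obtain ⟨j, hj, rfl⟩ := hq
    simp only [Finset.mem_filter, Finset.mem_univ, true_and, hf]
    split_ifs with h
    · exact h
    · exact lt_of_le_of_ne (not_lt.mp h) hj
  choose e he using hdvd
  refine ⟨∑ i, Polynomial.C (b i * e i) * ∏ j ∈ Finset.univ.erase i, (X - Polynomial.C (x j)),
    ?_, ?_, ?_⟩
  · apply (Polynomial.degree_sum_le _ _).trans_lt
    rw [Finset.sup_lt_iff (by exact WithBot.bot_lt_coe d)]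
    intro i _
    apply (cfc_degree _ _).trans_lt
    rw [Polynomial.degree_prod]
    simp only [Polynomial.degree_X_sub_C, Finset.sum_const, nsmul_eq_mul, mul_one]
    rw [Finset.card_erase_of_mem (Finset.mem_univ i), Finset.card_univ, Fintype.card_fin]
    exact_mod_cast (by omega : d - 1 < d)
  · intro k
    rw [Polynomial.finsetSum_coeff]
    refine Ideal.sum_mem _ fun i _ => ?_
    rw [Polynomial.coeff_C_mul, mul_assoc]
    exact Ideal.mul_mem_right _ _ (hb i)
  · intro i
    rw [Polynomial.eval_finsetSum, Finset.sum_eq_single i]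
    · rw [he i]
      simp [Polynomial.eval_prod]
      ring
    · intro j _ hj
      rw [Polynomial.eval_mul, Polynomial.eval_prod,
        Finset.prod_eq_zero (Finset.mem_erase.2 ⟨hj.symm, Finset.mem_univ i⟩), mul_zero]
      simp
    · simp

/-- A polynomial vanishing at distinct points is divisible by the product. -/
lemma cfc_dvd {B : Type*} [CommRing B] [IsDomain B] (d : ℕ) (x : Fin d → B)
    (hx : Function.Injective x) (F : Polynomial B) (hF : ∀ i, F.eval (x i) = 0) :
    (∏ i, (X - Polynomial.C (x i))) ∣ F := by
  classical
  by_cases h0 : F = 0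
  · simp [h0]
  have h : (Finset.univ.val.map x) ≤ F.roots := by
    rw [Multiset.le_iff_subset (Finset.univ.nodup.map hx)]
    intro a ha
    simp only [Multiset.mem_map] at ha
    obtain ⟨i, _, rfl⟩ := ha
    exact (Polynomial.mem_roots h0).2 (hF i)
  have := (Multiset.prod_X_sub_C_dvd_iff_le_roots h0 _).2 h
  rw [Multiset.map_map] at this
  exact this

/-- The linear functional sending `X ^ n` to `u n`. -/
noncomputable def seqFunctional {B : Type*} [CommRing B] (u : ℕ → B) : Polynomial B →ₗ[B] B :=
  Polynomial.lsum (fun n => LinearMap.toSpanSingleton B B (u n))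

lemma seqFunctional_C_mul_X_pow {B : Type*} [CommRing B] (u : ℕ → B) (n : ℕ) (a : B) :
    seqFunctional u (Polynomial.C a * X ^ n) = a * u n := by
  rw [Polynomial.C_mul_X_pow_eq_monomial]
  simp [seqFunctional, Polynomial.lsum_apply, Polynomial.sum_monomial_index]

lemma seqFunctional_mem {B : Type*} [CommRing B] (u : ℕ → B) (I : Ideal B) (G : Polynomial B)
    (hG : ∀ k, G.coeff k ∈ I) : seqFunctional u G ∈ I := by
  rw [seqFunctional, Polynomial.lsum_apply, Polynomial.sum]
  refine Ideal.sum_mem _ fun i _ => ?_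
  simpa using Ideal.mul_mem_right _ _ (hG i)

lemma seqFunctional_mul {B : Type*} [CommRing B] (u : ℕ → B) (d : ℕ) (C : Polynomial B)
    (hC : C.natDegree = d)
    (hu : ∀ n : ℕ, ∑ k ∈ Finset.range (d + 1), C.coeff k * u (n + k) = 0) (H : Polynomial B) :
    seqFunctional u (C * H) = 0 := by
  induction H using Polynomial.induction_on' with
  | add p q hp hq => rw [mul_add, map_add, hp, hq, add_zero]
  | monomial n a =>
    have : C * Polynomial.monomial n a =
        ∑ k ∈ Finset.range (d + 1), a • (Polynomial.C (C.coeff k) * X ^ (n + k)) := by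
      conv_lhs => rw [C.as_sum_range_C_mul_X_pow, hC, Finset.sum_mul]
      refine Finset.sum_congr rfl fun k _ => ?_
      rw [← Polynomial.C_mul_X_pow_eq_monomial, Polynomial.smul_eq_C_mul]
      ring
    rw [this, map_sum]
    simp only [map_smul, seqFunctional_C_mul_X_pow]
    rw [← Finset.smul_sum, hu, smul_zero]

/-- **Theorem 4, points 2 & 3.**  Set-up: `E/K` Galois extension of number fields,
`C ∈ 𝓞 K [X]` monic of degree `d ≥ 2` with distinct roots `x₁,…,x_d ∈ 𝓞 E` generating
`E/K`, `Δ = ∏_{i<j}(xᵢ-xⱼ)² ∈ 𝓞 K`.  Let `σ` be in the center of `Gal(E/K)`, `Q` a prime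
of `𝓞 E`, `P = Q ∩ 𝓞 K`, `p = |𝓞 K / P|`, with `σ(x) ≡ x^p (mod Q)` for all `x ∈ 𝓞 E`.
Writing `Ψ_σ = ∑_{k<d} Ψ_k(σ) X^k` for the root-permuting polynomial of `σ`, each
`Δ·Ψ_k(σ)` lies in `𝓞 K`, and for every sequence `U : ℕ → 𝓞 K` of class `C` one has
`Δ·U_p ≡ ∑_{k<d} (Δ·Ψ_k(σ))·U_k (mod P)`. -/
theorem central_frobenius_congruence
    {K E : Type*} [Field K] [NumberField K] [Field E] [NumberField E]
    [Algebra K E] [IsGalois K E]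
    (d : ℕ) (hd : 2 ≤ d)
    (C : Polynomial (𝓞 K)) (hC : C.Monic) (hdeg : C.natDegree = d)
    (x : Fin d → 𝓞 E) (hxinj : Function.Injective x)
    (hsplit : C.map (algebraMap (𝓞 K) (𝓞 E)) = ∏ i, (X - Polynomial.C (x i)))
    (hgen : IntermediateField.adjoin K
      (Set.range fun i => (algebraMap (𝓞 E) E (x i))) = ⊤)
    (Δ : 𝓞 K)
    (hΔ : algebraMap (𝓞 K) (𝓞 E) Δ =
      ∏ q ∈ Finset.univ.filter (fun q : Fin d × Fin d => q.1 < q.2), (x q.1 - x q.2) ^ 2)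
    (σ : E ≃ₐ[K] E) (hσ : σ ∈ Subgroup.center (E ≃ₐ[K] E))
    (Ψ : Polynomial E) (hΨdeg : Ψ.degree < d)
    (hΨeval : ∀ i, Ψ.eval (algebraMap (𝓞 E) E (x i)) = σ (algebraMap (𝓞 E) E (x i)))
    (Q : Ideal (𝓞 E)) (hQ : Q.IsPrime) (hQbot : Q ≠ ⊥)
    (P : Ideal (𝓞 K)) (hP : P = Ideal.comap (algebraMap (𝓞 K) (𝓞 E)) Q)
    (p : ℕ) (hp : p = Nat.card (𝓞 K ⧸ P))
    (hFrob : ∀ b : 𝓞 E, ∃ q ∈ Q, algebraMap (𝓞 E) E q =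
      σ (algebraMap (𝓞 E) E b) - (algebraMap (𝓞 E) E b) ^ p) :
    (∀ k : ℕ, ∃ a : 𝓞 K,
      algebraMap (𝓞 K) E a = algebraMap (𝓞 K) E Δ * Ψ.coeff k) ∧
    (∀ w : Fin d → 𝓞 K,
      (∀ k : Fin d, algebraMap (𝓞 K) E (w k) = algebraMap (𝓞 K) E Δ * Ψ.coeff k) →
      ∀ U : ℕ → 𝓞 K,
        (∀ n : ℕ, ∑ k ∈ Finset.range (d + 1), C.coeff k * U (n + k) = 0) →
        Δ * U p - ∑ k : Fin d, w k * U k ∈ P) := by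
  classical
  have hinjE : Function.Injective (algebraMap (𝓞 E) E) := RingOfIntegers.coe_injective
  have htower : ∀ a : 𝓞 K, algebraMap (𝓞 K) E a = algebraMap (𝓞 E) E (algebraMap (𝓞 K) (𝓞 E) a) :=
    fun a => IsScalarTower.algebraMap_apply (𝓞 K) (𝓞 E) E a
  have hxE : Function.Injective (fun i => algebraMap (𝓞 E) E (x i)) := hinjE.comp hxinj
  have huniq : ∀ f g : Polynomial E, f.degree < d → g.degree < d →
      (∀ i, f.eval (algebraMap (𝓞 E) E (x i)) = g.eval (algebraMap (𝓞 E) E (x i))) → f = g := by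
    intro f g hf hg h
    apply Polynomial.eq_of_degrees_lt_of_eval_index_eq (v := fun i => algebraMap (𝓞 E) E (x i))
      (Finset.univ : Finset (Fin d)) (hxE.injOn) (by simpa using hf) (by simpa using hg)
    intro i _
    exact h i
  choose q hqQ hq using hFrob
  have hσx : ∀ i, σ (algebraMap (𝓞 E) E (x i)) = algebraMap (𝓞 E) E (q (x i) + x i ^ p) := by
    intro i
    rw [map_add, hq, map_pow]
    ring
  constructor
  · -- integrality
    obtain ⟨G, hGdeg, -, hG⟩ := cfc_interp d hd x ⊤ (fun i => q (x i) + x i ^ p)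
      (fun i => Submodule.mem_top)
    rw [← hΔ] at hG
    have hGΨ : G.map (algebraMap (𝓞 E) E) = Polynomial.C (algebraMap (𝓞 K) E Δ) * Ψ := by
      apply huniq
      · exact (Polynomial.degree_map_le).trans_lt hGdeg
      · exact (cfc_degree _ _).trans_lt hΨdeg
      · intro i
        rw [Polynomial.eval_map_algebraMap, Polynomial.aeval_algebraMap_apply,
          Polynomial.coe_aeval_eq_eval, hG, Polynomial.eval_mul,
          Polynomial.eval_C, hΨeval, hσx, map_mul, ← htower]
    have hfix : ∀ τ : E ≃ₐ[K] E, Ψ.map (τ : E →+* E) = Ψ := by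
      intro τ
      apply huniq _ _ ((Polynomial.degree_map_le).trans_lt hΨdeg) hΨdeg
      intro i
      have hCE : (C.map (algebraMap (𝓞 K) K)).map (algebraMap K E) =
          ∏ j, (X - Polynomial.C (algebraMap (𝓞 E) E (x j))) := by
        have := congrArg (Polynomial.map (algebraMap (𝓞 E) E)) hsplit
        rw [Polynomial.map_map, ← IsScalarTower.algebraMap_eq] at this
        rw [Polynomial.map_map, ← IsScalarTower.algebraMap_eq, this]
        simp [Polynomial.map_prod]
      have hroot : ∃ j, τ.symm (algebraMap (𝓞 E) E (x i)) = algebraMap (𝓞 E) E (x j) := by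
        have h1 : Polynomial.aeval (algebraMap (𝓞 E) E (x i)) (C.map (algebraMap (𝓞 K) K)) = 0 := by
          rw [← Polynomial.eval_map_algebraMap, hCE, Polynomial.eval_prod]
          exact Finset.prod_eq_zero (Finset.mem_univ i) (by simp)
        have h2 : Polynomial.aeval (τ.symm (algebraMap (𝓞 E) E (x i)))
            (C.map (algebraMap (𝓞 K) K)) = 0 := by
          have := Polynomial.aeval_algHom_apply (τ.symm : E →ₐ[K] E) (algebraMap (𝓞 E) E (x i))
            (C.map (algebraMap (𝓞 K) K))
          rw [h1, map_zero] at this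
          exact this
        rw [← Polynomial.eval_map_algebraMap, hCE, Polynomial.eval_prod,
          Finset.prod_eq_zero_iff] at h2
        obtain ⟨j, _, hj⟩ := h2
        refine ⟨j, ?_⟩
        simpa [sub_eq_zero] using hj
      obtain ⟨j, hj⟩ := hroot
      have hxi : algebraMap (𝓞 E) E (x i) = (τ : E →+* E) (algebraMap (𝓞 E) E (x j)) := by
        rw [← hj]
        exact (τ.apply_symm_apply _).symm
      have hcomm := (Subgroup.mem_center_iff.1 hσ) τ
      have hc2 := DFunLike.congr_fun hcomm (algebraMap (𝓞 E) E (x j))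
      rw [hΨeval, hxi, Polynomial.eval_map_apply, hΨeval]
      exact hc2
    intro k
    have hk : Ψ.coeff k ∈ Set.range (algebraMap K E) := by
      rw [IsGalois.mem_range_algebraMap_iff_fixed]
      intro τ
      have := congrArg (fun f => Polynomial.coeff f k) (hfix τ)
      simpa [Polynomial.coeff_map] using this
    obtain ⟨c, hc⟩ := hk
    have hmem : algebraMap K E (algebraMap (𝓞 K) K Δ * c) = algebraMap (𝓞 E) E (G.coeff k) := by
      have := congrArg (fun f => Polynomial.coeff f k) hGΨ
      simp only [Polynomial.coeff_map, Polynomial.coeff_C_mul] at this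
      rw [this, map_mul, hc, ← IsScalarTower.algebraMap_apply]
    have hint : IsIntegral ℤ (algebraMap (𝓞 K) K Δ * c) := by
      rw [← isIntegral_algebraMap_iff (algebraMap K E).injective (A := K) (B := E), hmem]
      exact RingOfIntegers.isIntegral_coe _
    refine ⟨⟨_, hint⟩, ?_⟩
    have e1 : algebraMap (𝓞 K) E Δ * Ψ.coeff k = algebraMap K E (algebraMap (𝓞 K) K Δ * c) := by
      rw [map_mul, hc, ← IsScalarTower.algebraMap_apply]
    rw [e1]
    rfl
  · intro w hw U hU
    obtain ⟨G, -, hGQ, hG⟩ := cfc_interp d hd x Q (fun i => q (x i)) (fun i => hqQ (x i))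
    rw [← hΔ] at hG
    set φ := algebraMap (𝓞 K) (𝓞 E) with hφ
    set W : Polynomial (𝓞 E) := ∑ k : Fin d, Polynomial.C (φ (w k)) * X ^ (k : ℕ) with hW
    have hWev : ∀ i, W.eval (x i) = φ Δ * (q (x i) + x i ^ p) := by
      intro i
      apply hinjE
      rw [map_mul, ← hσx, ← hΨeval, ← htower, Polynomial.eval_eq_sum_range' (p := Ψ) (n := d)]
      · rw [hW, Polynomial.eval_finsetSum, map_sum, Finset.mul_sum, ← Fin.sum_univ_eq_sum_range
          (fun k => algebraMap (𝓞 K) E Δ * (Ψ.coeff k * (algebraMap (𝓞 E) E (x i)) ^ k))]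
        refine Finset.sum_congr rfl fun k _ => ?_
        rw [← mul_assoc, ← hw, htower]
        simp [hφ]
      · rcases eq_or_ne Ψ 0 with h | h
        · simp [h]; omega
        · exact (Polynomial.natDegree_lt_iff_degree_lt h).2 hΨdeg
    obtain ⟨H, hH⟩ := cfc_dvd d x hxinj (Polynomial.C (φ Δ) * X ^ p - W + G) (by
      intro i
      rw [Polynomial.eval_add, Polynomial.eval_sub, hWev, hG]
      simp
      ring)
    have hL : seqFunctional (fun n => φ (U n)) (Polynomial.C (φ Δ) * X ^ p - W + G) = 0 := by
      rw [hH, ← hsplit]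
      apply seqFunctional_mul _ d
      · rw [hC.natDegree_map, hdeg]
      · intro n
        have := congrArg φ (hU n)
        simpa [Polynomial.coeff_map] using this
    rw [map_add, map_sub, seqFunctional_C_mul_X_pow, hW, map_sum] at hL
    simp only [seqFunctional_C_mul_X_pow] at hL
    rw [hP, Ideal.mem_comap, map_sub, map_mul, map_sum]
    simp only [map_mul]
    rw [eq_neg_of_add_eq_zero_left hL]
    exact Q.neg_mem (seqFunctional_mem _ _ _ hGQ)
end

section
/- With the number-field setup below, let P be a prime ideal of A with Δ_C ∉ P and let Q be a prime ideal of B lying above P. Then the residue field B/Q is generated as an algebra over the residue field A/P by the images of the roots x₁,…,x_d of C, i.e. B/Q = (A/P)[x̄₁,…,x̄_d]. -/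
open Polynomial NumberField
/-- **Lemma 16.**  Set-up: `E/K` Galois extension of number fields, `C ∈ 𝓞 K [X]` monic of
degree `d ≥ 2` with distinct roots `x₁,…,x_d ∈ 𝓞 E` generating `E/K`, `Δ` its discriminant.
If `P` is a prime of `𝓞 K` with `Δ ∉ P` and `Q` a prime of `𝓞 E` above `P`, then the residue
field `𝓞 E / Q` is generated over `𝓞 K / P` by the images of the roots:
`𝓞 E / Q = (𝓞 K / P)[x̄₁, …, x̄_d]`. -/
theorem residue_field_generated_by_roots
    {K E : Type*} [Field K] [NumberField K] [Field E] [NumberField E]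
    [Algebra K E] [IsGalois K E]
    (d : ℕ) (hd : 2 ≤ d)
    (C : Polynomial (𝓞 K)) (hC : C.Monic) (hdeg : C.natDegree = d)
    (x : Fin d → 𝓞 E) (hxinj : Function.Injective x)
    (hsplit : C.map (algebraMap (𝓞 K) (𝓞 E)) = ∏ i, (X - Polynomial.C (x i)))
    (hgen : IntermediateField.adjoin K
      (Set.range fun i => (algebraMap (𝓞 E) E (x i))) = ⊤)
    (Δ : 𝓞 K)
    (hΔ : algebraMap (𝓞 K) (𝓞 E) Δ =
      ∏ q ∈ Finset.univ.filter (fun q : Fin d × Fin d => q.1 < q.2), (x q.1 - x q.2) ^ 2)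
    (P : Ideal (𝓞 K)) (hPprime : P.IsPrime) (hPbot : P ≠ ⊥) (hPΔ : Δ ∉ P)
    (Q : Ideal (𝓞 E)) (hQprime : Q.IsPrime)
    (hle : P ≤ Ideal.comap (algebraMap (𝓞 K) (𝓞 E)) Q)
    (hQP : Ideal.comap (algebraMap (𝓞 K) (𝓞 E)) Q = P) :
    letI : Algebra (𝓞 K ⧸ P) (𝓞 E ⧸ Q) := Ideal.Quotient.algebraQuotientOfLEComap hle
    Algebra.adjoin (𝓞 K ⧸ P) (Set.range fun i => Ideal.Quotient.mk Q (x i)) = ⊤ := by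
  have : P.IsMaximal := hPprime.isMaximal hPbot
  have hQbot : Q ≠ ⊥ := by
    rintro rfl
    apply hPbot
    rw [← hQP]
    exact Ideal.comap_bot_of_injective _
      (FaithfulSMul.algebraMap_injective (𝓞 K) (𝓞 E))
  have : Q.IsMaximal := hQprime.isMaximal hQbot
  have : Q.LiesOver P := ⟨hQP.symm⟩
  let _ : Field (𝓞 K ⧸ P) := Ideal.Quotient.field P
  let _ : Field (𝓞 E ⧸ Q) := Ideal.Quotient.field Q
  have : Finite (𝓞 K ⧸ P) := Ring.HasFiniteQuotients.finiteQuotient hPbot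
  have : Finite (𝓞 E ⧸ Q) := Ring.HasFiniteQuotients.finiteQuotient hQbot
  -- distinct roots stay distinct modulo `Q`
  have hprod : algebraMap (𝓞 K) (𝓞 E) Δ ∉ Q := fun h => hPΔ (by rw [← hQP]; exact h)
  have hlt : ∀ i j : Fin d, i < j → x i - x j ∉ Q := by
    intro i j hij h
    apply hprod
    rw [hΔ]
    refine Ideal.mem_of_dvd Q (Finset.dvd_prod_of_mem _ (a := (i, j)) (by simpa using hij)) ?_
    exact Ideal.pow_mem_of_mem Q h 2 (by norm_num)
  have hne : ∀ i j : Fin d, x i - x j ∈ Q → i = j := by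
    intro i j h
    rcases lt_trichotomy i j with h1 | h1 | h1
    · exact absurd h (hlt i j h1)
    · exact h1
    · refine absurd ?_ (hlt j i h1)
      rw [← neg_sub]
      exact Q.neg_mem h
  have hperm : ∀ (g : Gal(E/K)) (i : Fin d), ∃ j, g • x i = x j := by
    intro g i
    have h0 : aeval (x i) C = 0 := by
      rw [← eval_map_algebraMap, hsplit, eval_prod]
      exact Finset.prod_eq_zero (Finset.mem_univ i) (by simp)
    have h1 : aeval (g • x i) C = 0 := by
      have := aeval_algHom_apply (MulSemiringAction.toAlgHom (𝓞 K) (𝓞 E) g) (x i) C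
      rw [h0, map_zero] at this
      exact this
    rw [← eval_map_algebraMap, hsplit, eval_prod, Finset.prod_eq_zero_iff] at h1
    obtain ⟨j, -, hj⟩ := h1
    exact ⟨j, by simpa [sub_eq_zero] using hj⟩
  have hfix : ∀ g : Gal(E/K), (∀ i, g • x i - x i ∈ Q) → g = 1 := by
    intro g hg
    have h1 : ∀ i, g • x i = x i := by
      intro i
      obtain ⟨j, hj⟩ := hperm g i
      have := hg i
      rw [hj] at this
      rw [hj, hne j i this]
    have h2 : ∀ i, g (algebraMap (𝓞 E) E (x i)) = algebraMap (𝓞 E) E (x i) := by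
      intro i
      exact congrArg (algebraMap (𝓞 E) E) (h1 i)
    ext y
    have hy : y ∈ IntermediateField.adjoin K
        (Set.range fun i => (algebraMap (𝓞 E) E (x i))) := hgen ▸ IntermediateField.mem_top
    induction hy using IntermediateField.adjoin_induction with
    | mem z hz =>
      obtain ⟨i, rfl⟩ := hz
      exact h2 i
    | algebraMap z => simp
    | add z w _ _ hz hw => rw [map_add, map_add, hz, hw]
    | inv z _ hz => rw [map_inv₀, map_inv₀, hz]
    | mul z w _ _ hz hw => rw [map_mul, map_mul, hz, hw]
  have : IsGaloisGroup Gal(E/K) (𝓞 K) (𝓞 E) := IsGaloisGroup.of_isFractionRing _ _ _ K E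
  have hsurj := Ideal.Quotient.stabilizerHom_surjective Gal(E/K) P Q
  have : IsGalois (𝓞 K ⧸ P) (𝓞 E ⧸ Q) := inferInstance
  have key : IntermediateField.adjoin (𝓞 K ⧸ P)
      (Set.range fun i => Ideal.Quotient.mk Q (x i)) = ⊤ := by
    rw [← IsGalois.fixedField_fixingSubgroup (IntermediateField.adjoin (𝓞 K ⧸ P) _)]
    have hbot : (IntermediateField.adjoin (𝓞 K ⧸ P)
      (Set.range fun i => Ideal.Quotient.mk Q (x i))).fixingSubgroup = ⊥ := by
      rw [eq_bot_iff]
      intro τ hτ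
      obtain ⟨g, rfl⟩ := hsurj τ
      have hg : (g : Gal(E/K)) = 1 := by
        apply hfix
        intro i
        rw [← Ideal.Quotient.eq]
        exact (IntermediateField.mem_fixingSubgroup_iff _ _).1 hτ _
          (IntermediateField.subset_adjoin _ _ ⟨i, rfl⟩)
      have hg' : g = 1 := Subtype.ext hg
      rw [hg', map_one]
      exact Subgroup.mem_bot.2 rfl
    rw [hbot, IntermediateField.fixedField_bot]
  rw [IntermediateField.adjoin_eq_top_iff_of_isAlgebraic
    (fun y _ => Algebra.IsAlgebraic.isAlgebraic y)] at key
  exact key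
end

section
/- Let K be a number field with ring of integers A, let s, π ∈ A with s ≠ 0 and C(X) = X² − sX + π with discriminant Δ = s² − 4π not a square in K. Let U, V : ℕ → A be two sequences of class C. If for every prime ideal P of A with Δ ∉ P one has U_p ≡ V_p (mod P) where p := |A/P|, then U_n = V_n for all n ∈ ℕ. -/
open NumberField

lemma ff_seq {F : Type*} [Field F] [Finite F] (h2 : (2:F) ≠ 0) (s π : F)
    (hD : s ^ 2 - 4 * π ≠ 0) (w : ℕ → F)
    (hw : ∀ n, w (n+2) - s * w (n+1) + π * w n = 0) :
    (IsSquare (s ^ 2 - 4 * π) ∧ w (Nat.card F) = w 1) ∨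
    (¬ IsSquare (s ^ 2 - 4 * π) ∧ w (Nat.card F) = s * w 0 - w 1) := by
  classical
  have := Fintype.ofFinite F
  rw [Nat.card_eq_fintype_card]
  set D := s ^ 2 - 4 * π with hDdef
  let E := AlgebraicClosure F
  obtain ⟨e, he⟩ := IsAlgClosed.exists_pow_nat_eq (algebraMap F E D) (n := 2) (by norm_num)
  let c : F →+* E := algebraMap F E
  have hchar : ringChar F ≠ 2 := fun h => h2 (by
    have := CharP.cast_eq_zero F (ringChar F); rw [h] at this; exact_mod_cast this)
  have hodd := FiniteField.odd_card_of_char_ne_two hchar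
  have h2E : (2:E) ≠ 0 := by
    have := (map_ne_zero c).2 h2; rwa [map_ofNat] at this
  have he0 : e ≠ 0 := by
    rintro rfl
    apply hD
    have : c D = 0 := by rw [← he]; ring
    simpa using this
  set a := (c s + e) / 2 with ha
  set b := (c s - e) / 2 with hb
  have hab : a + b = c s := by rw [ha, hb, ← add_div, div_eq_iff h2E]; ring
  have hab' : a - b = e := by rw [ha, hb, ← sub_div, div_eq_iff h2E]; ring
  have hprod : a * b = c π := by
    have : c D = c s ^ 2 - 4 * c π := by rw [hDdef, map_sub, map_pow, map_mul, map_ofNat]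
    have h4 : 4 * (a * b) = 4 * c π := by
      have : e^2 = c s ^ 2 - 4 * c π := by rw [he]; exact this
      have e1 : 4 * (a*b) = (a+b)^2 - (a-b)^2 := by ring
      rw [e1, hab, hab', this]; ring
    have h4' : (4:E) ≠ 0 := by
      have : (4:E) = 2 * 2 := by norm_num
      rw [this]; exact mul_ne_zero h2E h2E
    exact mul_left_cancel₀ h4' h4
  have hrec : ∀ n, c (w (n+2)) = c s * c (w (n+1)) - c π * c (w n) := by
    intro n
    have := congrArg c (hw n)
    simp only [map_add, map_sub, map_mul, map_zero] at this
    linear_combination this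
  have key : ∀ n, e * c (w n) = (c (w 1) - b * c (w 0)) * a ^ n - (c (w 1) - a * c (w 0)) * b ^ n ∧
     e * c (w (n+1)) = (c (w 1) - b * c (w 0)) * a ^ (n+1) - (c (w 1) - a * c (w 0)) * b ^ (n+1) := by
    intro n
    induction n with
    | zero =>
      constructor
      · rw [← hab']; ring
      · rw [← hab']; ring
    | succ n ih =>
      refine ⟨ih.2, ?_⟩
      rw [show n+1+1 = n+2 from rfl, hrec, mul_sub]
      have := ih.1; have := ih.2
      calc e * (c s * c (w (n+1))) - e * (c π * c (w n)) = c s * (e * c (w (n+1))) - c π * (e * c (w n)) := by ring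
        _ = _ := by rw [ih.1, ih.2, ← hab, ← hprod]; ring
  let φ := FiniteField.frobeniusAlgHom F E
  have hφ : ∀ x : E, φ x = x ^ Fintype.card F := fun x => rfl
  have hφc : ∀ x : F, φ (c x) = c x := fun x => AlgHom.commutes φ x
  have hφe : φ e = c (D ^ (Fintype.card F / 2)) * e := by
    rw [hφ]
    conv_lhs => rw [← Nat.two_mul_div_two_add_one_of_odd (Nat.odd_iff.2 hodd)]
    rw [pow_succ, pow_mul, he, map_pow]
  have k1 := (key (Fintype.card F)).1
  rw [← hφ, ← hφ] at k1
  have hφ2 : φ 2 = 2 := map_ofNat φ 2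
  by_cases hsq : IsSquare D
  · left
    refine ⟨hsq, ?_⟩
    have : D ^ (Fintype.card F / 2) = 1 := (FiniteField.isSquare_iff hchar hD).1 hsq
    rw [this, map_one, one_mul] at hφe
    have h1 : φ a = a := by rw [ha, map_div₀, map_add, hφc, hφe, hφ2]
    have h2 : φ b = b := by rw [hb, map_div₀, map_sub, hφc, hφe, hφ2]
    rw [h1, h2] at k1
    apply c.injective
    apply mul_left_cancel₀ he0
    rw [k1, ← hab']; ring
  · right
    refine ⟨hsq, ?_⟩
    have : D ^ (Fintype.card F / 2) = -1 := by
      rcases FiniteField.pow_dichotomy hchar hD with h | h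
      · exact absurd ((FiniteField.isSquare_iff hchar hD).2 h) hsq
      · exact h
    rw [this, map_neg, map_one, neg_one_mul] at hφe
    have h1 : φ a = b := by rw [ha, map_div₀, map_add, hφc, hφe, hφ2, ← sub_eq_add_neg]
    have h2 : φ b = a := by rw [hb, map_div₀, map_sub, hφc, hφe, hφ2, sub_neg_eq_add]
    rw [h1, h2] at k1
    apply c.injective
    apply mul_left_cancel₀ he0
    rw [k1, map_sub, map_mul, ← hab', ← hab]; ring

lemma prime_seq {K : Type*} [Field K] [NumberField K] (s π : 𝓞 K) (W : ℕ → 𝓞 K)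
    (hW : ∀ n : ℕ, W (n + 2) - s * W (n + 1) + π * W n = 0)
    (P : Ideal (𝓞 K)) (hP : P.IsPrime) (hP0 : P ≠ ⊥) (h2 : (2 : 𝓞 K) ∉ P)
    (hD : s ^ 2 - 4 * π ∉ P) (hc : W (Nat.card (𝓞 K ⧸ P)) ∈ P) :
    ((∃ d, (s ^ 2 - 4 * π) - d * d ∈ P) ∧ W 1 ∈ P) ∨
    ((¬ ∃ d, (s ^ 2 - 4 * π) - d * d ∈ P) ∧ s * W 0 - W 1 ∈ P) := by
  have hmax : P.IsMaximal := hP.isMaximal hP0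
  let := Ideal.Quotient.field P
  have hfin : Finite (𝓞 K ⧸ P) := Ideal.finiteQuotientOfFreeOfNeBot P hP0
  let m := Ideal.Quotient.mk P
  have hm : ∀ x, m x = 0 ↔ x ∈ P := fun x => Ideal.Quotient.eq_zero_iff_mem
  have hsq : IsSquare (m s ^ 2 - 4 * m π) ↔ ∃ d, (s ^ 2 - 4 * π) - d * d ∈ P := by
    constructor
    · rintro ⟨r, hr⟩
      obtain ⟨d, rfl⟩ := Ideal.Quotient.mk_surjective r
      refine ⟨d, (hm _).1 ?_⟩
      simp only [map_sub, map_pow, map_mul, map_ofNat]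
      rw [hr]; exact sub_self _
    · rintro ⟨d, hd⟩
      refine ⟨m d, ?_⟩
      have := (hm _).2 hd
      simp only [map_sub, map_pow, map_mul, map_ofNat] at this
      exact sub_eq_zero.1 this
  have := ff_seq (F := 𝓞 K ⧸ P) (by
      intro h; apply h2; rw [← hm, map_ofNat]; exact h) (m s) (m π) (by
      intro h; apply hD; rw [← hm, map_sub, map_pow, map_mul, map_ofNat]; exact h) (fun n => m (W n)) (by
      intro n
      have := congrArg m (hW n)
      simpa using this)
  rw [hsq] at this
  have h0 : m (W (Nat.card (𝓞 K ⧸ P))) = 0 := (hm _).2 hc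
  rcases this with ⟨h, h'⟩ | ⟨h, h'⟩
  · left; exact ⟨h, (hm _).1 (by rw [← h']; exact h0)⟩
  · right
    refine ⟨h, (hm _).1 ?_⟩
    rw [map_sub, map_mul, ← h']; exact h0

lemma exists_nonunit {K : Type*} [Field K] [NumberField K] (c : 𝓞 K) (hc : c ≠ 0) :
    ∃ k : ℕ, ¬ IsUnit (c * (k:𝓞 K) ^ 2 - 1) := by
  by_contra! H
  obtain ⟨k, hk⟩ : ∃ k : ℕ, ∀ w : InfinitePlace K, 2 < w (c : K) * (k : ℝ) := by
    have : ∀ w : InfinitePlace K, ∃ k : ℕ, 2 < w (c : K) * (k : ℝ) := by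
      intro w
      have hw : 0 < w (c : K) := by
        rw [InfinitePlace.pos_iff]; exact_mod_cast hc
      obtain ⟨k, hk⟩ := exists_nat_gt (2 / w (c:K))
      exact ⟨k, by rwa [div_lt_iff₀' hw] at hk⟩
    choose f hf using this
    refine ⟨∑ w, f w, fun w => (hf w).trans_le ?_⟩
    gcongr
    exact_mod_cast Finset.single_le_sum (f := f) (fun _ _ => Nat.zero_le _) (Finset.mem_univ w)
  obtain ⟨u, hu⟩ := H k
  have hw1 : ∀ w : InfinitePlace K, w ((↑u⁻¹ : 𝓞 K) : K) < 1 := by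
    intro w
    have hmul : w ((↑u⁻¹ : 𝓞 K) : K) * w ((u : 𝓞 K) : K) = 1 := by
      rw [← map_mul, ← map_mul, Units.inv_mul, map_one, map_one]
    have hgt : 1 < w ((u : 𝓞 K) : K) := by
      rw [hu]
      have h1 : w (c : K) * (k:ℝ)^2 ≤ w ((c * (k:𝓞 K) ^ 2 - 1 : 𝓞 K) : K) + 1 := by
        have hh : w (c : K) * (k:ℝ)^2 = w (((c * (k:𝓞 K) ^ 2 - 1 : 𝓞 K) : K) + 1) := by
          have : (((c * (k:𝓞 K) ^ 2 - 1 : 𝓞 K) : K) + 1) = (c:K) * (k:K)^2 := by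
            push_cast; simp
          rw [this, map_mul, map_pow]
          congr 2
          have := InfinitePlace.norm_embedding_eq w (k:K)
          rw [← this]; simp
        rw [hh]
        have := w.1.add_le ((c * (k:𝓞 K) ^ 2 - 1 : 𝓞 K) : K) 1
        have h1 : w.1 1 = 1 := map_one w.1
        rw [h1] at this
        exact this
      have hk1 : (1:ℝ) ≤ k := by
        rcases Nat.eq_zero_or_pos k with h | h
        · have := hk w; rw [h] at this; simp at this; linarith
        · exact_mod_cast h
      nlinarith [hk w]
    have := apply_nonneg w ((↑u⁻¹ : 𝓞 K) : K)
    by_contra! h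
    nlinarith
  obtain ⟨w⟩ : Nonempty (InfinitePlace K) := inferInstance
  exact absurd (InfinitePlace.one_le_of_lt_one (w := w) (a := (↑u⁻¹ : 𝓞 K)) (Units.ne_zero _)
    (fun z _ => hw1 z)) (not_le.2 (hw1 w))

lemma W1_zero {K : Type*} [Field K] [NumberField K] (s π : 𝓞 K) (W : ℕ → 𝓞 K)
    (hW : ∀ n : ℕ, W (n + 2) - s * W (n + 1) + π * W n = 0) (hD0 : s ^ 2 - 4 * π ≠ 0)
    (hc : ∀ P : Ideal (𝓞 K), P.IsPrime → P ≠ ⊥ → s ^ 2 - 4 * π ∉ P →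
      W (Nat.card (𝓞 K ⧸ P)) ∈ P) : W 1 = 0 := by
  by_contra h1
  set D := s ^ 2 - 4 * π with hD
  obtain ⟨k, hk⟩ := exists_nonunit (D * (2 * W 1) ^ 2) (by simp [hD0, h1])
  obtain ⟨P, hPmax, hkP⟩ := exists_max_ideal_of_mem_nonunits (mem_nonunits_iff.2 hk)
  have hone : (1 : 𝓞 K) ∉ P := fun h => hPmax.ne_top ((Ideal.eq_top_iff_one _).2 h)
  have aux : ∀ x y : 𝓞 K, D * (2 * W 1) ^ 2 * (k:𝓞 K) ^ 2 = x * y → x ∉ P := by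
    intro x y hxy hx
    apply hone
    have : (1 : 𝓞 K) = x * y - (D * (2 * W 1) ^ 2 * (k:𝓞 K) ^ 2 - 1) := by rw [hxy]; ring
    rw [this]
    exact P.sub_mem (P.mul_mem_right _ hx) hkP
  have h2 : (2 : 𝓞 K) ∉ P := aux 2 (D * 2 * W 1 ^ 2 * k ^ 2) (by ring)
  have hDP : D ∉ P := aux D ((2 * W 1)^2 * k ^ 2) (by ring)
  have hWP : W 1 ∉ P := aux (W 1) (D * 4 * W 1 * k ^ 2) (by ring)
  have hP0 : P ≠ ⊥ := by
    rintro rfl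
    exact Ring.ne_bot_of_isMaximal_of_not_isField hPmax (NumberField.RingOfIntegers.not_isField K) rfl
  rcases prime_seq s π W hW P hPmax.isPrime hP0 h2 hDP (hc P hPmax.isPrime hP0 hDP) with ⟨_, h⟩ | ⟨h, _⟩
  · exact hWP h
  · apply h
    refine ⟨D * (2 * W 1) * k, ?_⟩
    have : D - D * (2 * W 1) * k * (D * (2 * W 1) * k) = - D * (D * (2 * W 1) ^ 2 * (k:𝓞 K) ^ 2 - 1) := by ring
    rw [← hD, this]
    exact P.mul_mem_left _ hkP

lemma split_primes {K L : Type*} [Field K] [NumberField K] [Field L] [NumberField L] [Algebra K L]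
    (h2 : Module.finrank K L = 2) (D : 𝓞 K) (e : 𝓞 L) (he : e * e = algebraMap (𝓞 K) (𝓞 L) D)
    (σ : L ≃ₐ[K] L) (hσ : σ (e : L) = - (e : L))
    (P : Ideal (𝓞 K)) (hP : P.IsPrime) (hP0 : P ≠ ⊥) (h2P : (2 : 𝓞 K) ∉ P) (hDP : D ∉ P)
    (hd : ∃ d, D - d * d ∈ P) :
    ∃ Q Q' : Ideal (𝓞 L), Q.IsPrime ∧ Q'.IsPrime ∧ Q ≠ Q' ∧
      Q.comap (algebraMap (𝓞 K) (𝓞 L)) = P ∧ Q'.comap (algebraMap (𝓞 K) (𝓞 L)) = P ∧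
      Ideal.absNorm Q = Ideal.absNorm P ∧ Ideal.absNorm Q' = Ideal.absNorm P := by
  classical
  have hmax : P.IsMaximal := hP.isMaximal hP0
  obtain ⟨d, hd⟩ := hd
  have hquad : Algebra.IsQuadraticExtension K L := { finrank_eq_two' := h2 }
  let τ : 𝓞 L →+* 𝓞 L := RingOfIntegers.mapRingHom (σ : L →+* L)
  have hτe : τ e = - e := by
    apply RingOfIntegers.ext
    show σ (e : L) = _
    rw [hσ]; rfl
  have hτc : τ.comp (algebraMap (𝓞 K) (𝓞 L)) = algebraMap (𝓞 K) (𝓞 L) := by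
    ext x
    show σ (algebraMap K L x) = algebraMap K L x
    exact σ.commutes _
  have hover : ∀ Q : Ideal (𝓞 L), Q.LiesOver P ↔ Q.comap (algebraMap (𝓞 K) (𝓞 L)) = P := by
    intro Q
    exact ⟨fun h => h.over.symm, fun h => ⟨h.symm⟩⟩
  obtain ⟨⟨Q, hQ, hQP⟩⟩ := P.nonempty_primesOver (S := 𝓞 L)
  have hQc := (hover Q).1 hQP
  let Q' := Q.comap τ
  have hQ' : Q'.IsPrime := Ideal.comap_isPrime τ Q
  have hQc' : Q'.comap (algebraMap (𝓞 K) (𝓞 L)) = P := by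
    rw [Ideal.comap_comap, hτc, hQc]
  have hQP' := (hover Q').2 hQc'
  have hmem : ∀ x, algebraMap (𝓞 K) (𝓞 L) x ∈ Q ↔ x ∈ P := by
    intro x; rw [← hQc]; rfl
  have hmem' : ∀ x, algebraMap (𝓞 K) (𝓞 L) x ∈ Q' ↔ x ∈ P := by
    intro x; rw [← hQc']; rfl
  have hdP : d ∉ P := by
    intro h
    apply hDP
    have := P.add_mem hd (P.mul_mem_left d h)
    simpa using this
  have h2d : ∀ y : 𝓞 L, y = algebraMap (𝓞 K) (𝓞 L) d + algebraMap (𝓞 K) (𝓞 L) d → y ∉ Q := by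
    rintro y rfl h
    rw [← map_add, hmem, ← two_mul] at h
    rcases hP.mem_or_mem h with h | h
    · exact h2P h
    · exact hdP h
  have hne : Q ≠ Q' := by
    intro hEq
    have hτQ : ∀ x ∈ Q, τ x ∈ Q := by
      intro x hx
      have : x ∈ Q' := hEq ▸ hx
      exact this
    have hfac : (e - algebraMap (𝓞 K) (𝓞 L) d) * (e + algebraMap (𝓞 K) (𝓞 L) d) ∈ Q := by
      have : (e - algebraMap (𝓞 K) (𝓞 L) d) * (e + algebraMap (𝓞 K) (𝓞 L) d) =
        algebraMap (𝓞 K) (𝓞 L) (D - d * d) := by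
        rw [map_sub, map_mul, ← he]; ring
      rw [this, hmem]; exact hd
    have hτd : τ (algebraMap (𝓞 K) (𝓞 L) d) = algebraMap (𝓞 K) (𝓞 L) d :=
      congrArg (fun f => f d) hτc
    rcases hQ.mem_or_mem hfac with h | h
    · have h' := hτQ _ h
      rw [map_sub, hτe, hτd] at h'
      refine h2d _ ?_ (Q.neg_mem (Q.add_mem h h'))
      ring
    · have h' := hτQ _ h
      rw [map_add, hτe, hτd] at h'
      refine h2d _ ?_ (Q.add_mem h h')
      ring
  have hfin : (P.primesOver (𝓞 L)).Finite := Algebra.QuasiFinite.finite_primesOver P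
  have hcard : 2 ≤ (P.primesOver (𝓞 L)).ncard := by
    rw [← Set.ncard_pair hne]
    refine Set.ncard_le_ncard ?_ hfin
    rintro x (rfl | rfl)
    · exact ⟨hQ, hQP⟩
    · exact ⟨hQ', hQP'⟩
  have hmain := Ideal.ncard_primesOver_mul_ramificationIdxIn_mul_inertiaDegIn P (𝓞 L) Gal(L/K)
  have hG : Nat.card Gal(L/K) = 2 := by rw [IsGalois.card_aut_eq_finrank, h2]
  rw [hG] at hmain
  have hf : P.inertiaDegIn (𝓞 L) = 1 := by
    have hpos : P.ramificationIdxIn (𝓞 L) * P.inertiaDegIn (𝓞 L) = 1 := by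
      rcases h : P.ramificationIdxIn (𝓞 L) * P.inertiaDegIn (𝓞 L) with _ | _ | n
      · rw [h] at hmain; omega
      · rfl
      · rw [h] at hmain; nlinarith
    exact Nat.eq_one_of_mul_eq_one_left hpos
  have hnorm : ∀ Q : Ideal (𝓞 L), Q.IsPrime → Q.LiesOver P → Ideal.absNorm Q = Ideal.absNorm P := by
    intro Q hQ hQP
    have : Q.IsMaximal := Ideal.IsMaximal.of_liesOver_isMaximal Q P
    rw [Ideal.absNorm_eq_pow_inertiaDeg'_of_liesOver Q P hP hP0, Ideal.inertiaDeg'_eq_inertiaDeg,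
      ← Ideal.inertiaDegIn_eq_inertiaDeg P Q Gal(L/K), hf, pow_one]
  exact ⟨Q, Q', hQ, hQ', hne, hQc, hQc', hnorm Q hQ hQP, hnorm Q' hQ' hQP'⟩

lemma quad_ext.{u} {K : Type u} [Field K] [NumberField K] (D : 𝓞 K)
    (hD : ¬ IsSquare (algebraMap (𝓞 K) K D)) :
    ∃ (L : Type u) (_ : Field L) (_ : NumberField L) (_ : Algebra K L) (e : 𝓞 L) (σ : L ≃ₐ[K] L),
      Module.finrank K L = 2 ∧ e * e = algebraMap (𝓞 K) (𝓞 L) D ∧ σ (e : L) = - (e : L) := by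
  open Polynomial in
  let f : K[X] := X ^ 2 - C (algebraMap (𝓞 K) K D)
  have hdeg : f.natDegree = 2 := natDegree_X_pow_sub_C
  have hmonic : f.Monic := monic_X_pow_sub_C _ (by norm_num)
  have hirr : Irreducible f := by
    apply X_pow_sub_C_irreducible_of_prime Nat.prime_two
    intro b hb
    exact hD ⟨b, by rw [← hb, sq]⟩
  have hfact : Fact (Irreducible f) := ⟨hirr⟩
  let L := AdjoinRoot f
  have hfd : FiniteDimensional K L := (AdjoinRoot.powerBasis hirr.ne_zero).finite
  have hchar : CharZero L := charZero_of_injective_algebraMap (algebraMap K L).injective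
  have hfdQ : FiniteDimensional ℚ L := by
    have : IsScalarTower ℚ K L := IsScalarTower.of_algebraMap_eq' (Subsingleton.elim _ _)
    exact FiniteDimensional.trans ℚ K L
  have hNF : NumberField L := { to_charZero := hchar, to_finiteDimensional := hfdQ }
  have h2 : Module.finrank K L = 2 := by
    rw [(AdjoinRoot.powerBasis hirr.ne_zero).finrank, AdjoinRoot.powerBasis_dim, hdeg]
  let r : L := AdjoinRoot.root f
  have hr : r * r = algebraMap K L (algebraMap (𝓞 K) K D) := by
    have := AdjoinRoot.eval₂_root f
    simp only [f, eval₂_sub, eval₂_X_pow, eval₂_C] at this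
    rw [← sq]
    exact sub_eq_zero.1 this
  have hrint : IsIntegral ℤ r := by
    have : IsIntegral ℤ (r ^ 2) := by
      rw [sq, hr]
      exact (RingOfIntegers.isIntegral_coe D).map (algebraMap K L).toIntAlgHom
    exact IsIntegral.of_pow (by norm_num) this
  let σ0 : L →ₐ[K] L := AdjoinRoot.liftAlgHom f (Algebra.ofId K L) (-r) (by
    simp only [f, eval₂_sub, eval₂_X_pow, eval₂_C]
    rw [neg_sq, sq, hr]; exact sub_self _)
  let σ : L ≃ₐ[K] L := AlgEquiv.ofBijective σ0 (Algebra.IsAlgebraic.algHom_bijective σ0)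
  refine ⟨L, inferInstance, hNF, inferInstance, ⟨r, hrint⟩, σ, h2, ?_, ?_⟩
  · apply RingOfIntegers.ext
    exact hr
  · show σ0 r = - r
    exact AdjoinRoot.liftAlgHom_root ..

open Filter Topology in
lemma zeta_bounds (K : Type*) [Field K] [NumberField K] :
    ∃ c C : ℝ, 0 < c ∧ 0 < C ∧ ∀ᶠ x : ℝ in 𝓝[>] 1, 
      ENNReal.ofReal (c / (x - 1)) ≤
        ∑' I : Ideal (𝓞 K), ENNReal.ofReal ((Ideal.absNorm I : ℝ) ^ (-x)) ∧
      ∑' I : Ideal (𝓞 K), ENNReal.ofReal ((Ideal.absNorm I : ℝ) ^ (-x)) ≤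
        ENNReal.ofReal (C / (x - 1)) := by
  have hρ := dedekindZeta_residue_pos K
  set ρ := dedekindZeta_residue K
  have hlim := tendsto_sub_one_mul_dedekindZeta_nhdsGT K
  let a : ℕ → ℕ := fun n => Nat.card {I : Ideal (𝓞 K) // Ideal.absNorm I = n}
  let g : ℝ → ℕ → ℝ := fun x n => (a n : ℝ) * (n : ℝ) ^ (-x)
  have hterm : ∀ x : ℝ, 1 < x → ∀ n, LSeries.term (fun n => (a n : ℂ)) x n = ((g x n : ℝ) : ℂ) := by
    intro x hx n
    rcases eq_or_ne n 0 with rfl | hn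
    · have : -x ≠ 0 := by linarith
      simp [g, Real.zero_rpow this]
    · rw [LSeries.term_of_ne_zero hn]
      simp only [g]
      rw [Real.rpow_neg (Nat.cast_nonneg n), Complex.ofReal_mul, Complex.ofReal_inv,
        Complex.ofReal_cpow (Nat.cast_nonneg n), div_eq_mul_inv]
      simp
  have hzeta : ∀ x : ℝ, 1 < x → dedekindZeta K x = ((∑' n, g x n : ℝ) : ℂ) := by
    intro x hx
    rw [Complex.ofReal_tsum]
    unfold dedekindZeta LSeries
    exact tsum_congr (hterm x hx)
  have hgnn : ∀ x n, 0 ≤ g x n := fun x n => by positivity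
  have hreal : Tendsto (fun x : ℝ => (x - 1) * ∑' n, g x n) (𝓝[>] 1) (𝓝 ρ) := by
    have h2 := (Complex.continuous_re.tendsto _).comp hlim
    rw [Complex.ofReal_re] at h2
    refine h2.congr' ?_
    filter_upwards [self_mem_nhdsWithin] with x hx
    simp only [Function.comp]
    rw [hzeta x hx, ← Complex.ofReal_one, ← Complex.ofReal_sub, ← Complex.ofReal_mul, Complex.ofReal_re]
  have hE : ∀ x : ℝ, 1 < x → Summable (g x) →
      ∑' I : Ideal (𝓞 K), ENNReal.ofReal ((Ideal.absNorm I : ℝ) ^ (-x)) =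
        ENNReal.ofReal (∑' n, g x n) := by
    intro x hx hs
    rw [ENNReal.ofReal_tsum_of_nonneg (hgnn x) hs,
      ← ENNReal.tsum_fiberwise _ (fun I : Ideal (𝓞 K) => Ideal.absNorm I)]
    refine tsum_congr fun n => ?_
    have hfin : Finite ((fun I : Ideal (𝓞 K) => Ideal.absNorm I) ⁻¹' {n}) :=
      Ideal.finite_setOfPred_absNorm_eq n
    have : ∀ b : ((fun I : Ideal (𝓞 K) => Ideal.absNorm I) ⁻¹' {n}),
        ENNReal.ofReal ((Ideal.absNorm b.1 : ℝ) ^ (-x)) = ENNReal.ofReal ((n : ℝ) ^ (-x)) := by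
      rintro ⟨b, hb⟩
      simp only [Set.mem_preimage, Set.mem_singleton_iff] at hb
      simp only [hb]
    rw [tsum_congr this]
    have hF := Fintype.ofFinite ((fun I : Ideal (𝓞 K) => Ideal.absNorm I) ⁻¹' {n})
    rw [tsum_fintype, Finset.sum_const, Finset.card_univ, ← Nat.card_eq_fintype_card, nsmul_eq_mul]
    simp only [g]
    rw [ENNReal.ofReal_mul (Nat.cast_nonneg _), ENNReal.ofReal_natCast]
    rfl
  refine ⟨ρ / 2, 2 * ρ, by positivity, by positivity, ?_⟩
  filter_upwards [self_mem_nhdsWithin, hreal.eventually (lt_mem_nhds (by linarith : ρ / 2 < ρ)),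
    hreal.eventually (gt_mem_nhds (by linarith : ρ < 2 * ρ))] with x hx h1 h2
  have hx' : 0 < x - 1 := sub_pos.2 hx
  have hs : Summable (g x) := by
    by_contra h
    rw [tsum_eq_zero_of_not_summable h, mul_zero] at h1
    linarith
  rw [hE x hx hs]
  constructor
  · apply ENNReal.ofReal_le_ofReal
    rw [div_le_iff₀' hx']; exact h1.le
  · apply ENNReal.ofReal_le_ofReal
    rw [le_div_iff₀' hx']; exact h2.le

/-- nonzero ideals not divisible by any member of S -/
def goodIdeals {K : Type*} [Field K] (S : Finset (Ideal (𝓞 K))) : Set (Ideal (𝓞 K)) :=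
  {I | ∀ P ∈ S, ¬ P ∣ I}

lemma removal {K : Type*} [Field K] [NumberField K] (x : ℝ) (hx : 1 < x)
    (hfin : ∑' I : Ideal (𝓞 K), ENNReal.ofReal ((Ideal.absNorm I : ℝ) ^ (-x)) ≠ ⊤)
    (S : Finset (Ideal (𝓞 K))) (hS : ∀ P ∈ S, P ≠ ⊤) :
    ∑' I : Ideal (𝓞 K), ENNReal.ofReal ((Ideal.absNorm I : ℝ) ^ (-x)) ≤
     2 ^ S.card * ∑' I : goodIdeals S, ENNReal.ofReal ((Ideal.absNorm I.1 : ℝ) ^ (-x)) := by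
  classical
  let w : Ideal (𝓞 K) → ENNReal := fun I => ENNReal.ofReal ((Ideal.absNorm I : ℝ) ^ (-x))
  have hwmul : ∀ I J, w (I * J) = w I * w J := by
    intro I J
    simp only [w]
    rw [map_mul, Nat.cast_mul, Real.mul_rpow (Nat.cast_nonneg _) (Nat.cast_nonneg _),
      ENNReal.ofReal_mul (by positivity)]
  have hwP : ∀ P : Ideal (𝓞 K), P ≠ ⊤ → w P ≤ 2⁻¹ := by
    intro P hP
    rcases Nat.eq_zero_or_pos (Ideal.absNorm P) with h | h
    · simp only [w, h]
      have : -x ≠ 0 := by linarith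
      simp [Real.zero_rpow this]
    · have hne : Ideal.absNorm P ≠ 1 := fun h => hP (Ideal.absNorm_eq_one_iff.1 h)
      have h2 : (2:ℝ) ≤ Ideal.absNorm P := by exact_mod_cast (by omega : 2 ≤ Ideal.absNorm P)
      have : (Ideal.absNorm P : ℝ) ^ (-x) ≤ 2⁻¹ := by
        calc (Ideal.absNorm P : ℝ) ^ (-x) ≤ (Ideal.absNorm P : ℝ) ^ (-1 : ℝ) :=
              Real.rpow_le_rpow_of_exponent_le (by linarith) (by linarith)
          _ = (Ideal.absNorm P : ℝ)⁻¹ := Real.rpow_neg_one _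
          _ ≤ 2⁻¹ := inv_anti₀ (by norm_num) h2
      calc w P ≤ ENNReal.ofReal 2⁻¹ := ENNReal.ofReal_le_ofReal this
        _ = 2⁻¹ := by rw [ENNReal.ofReal_inv_of_pos (by norm_num)]; simp
  show ∑' I, w I ≤ 2 ^ S.card * ∑' I : goodIdeals S, w I
  change ∑' I, w I ≠ ⊤ at hfin
  induction S using Finset.induction_on with
  | empty =>
    have : goodIdeals (∅ : Finset (Ideal (𝓞 K))) = Set.univ := by ext; simp [goodIdeals]
    rw [this, tsum_univ w]; simp
  | insert P S hPS ih =>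
    refine (ih (fun Q hQ => hS Q (Finset.mem_insert_of_mem hQ))).trans ?_
    rw [Finset.card_insert_of_notMem hPS, pow_succ, mul_assoc]
    gcongr
    have hZfin : ∑' I : goodIdeals S, w I ≠ ⊤ :=
      ne_top_of_le_ne_top hfin (ENNReal.tsum_comp_le_tsum_of_injective Subtype.val_injective w)
    have hsub : goodIdeals S ⊆ goodIdeals (insert P S) ∪ (fun J => P * J) '' goodIdeals S := by
      intro I hI
      by_cases h : P ∣ I
      · right
        obtain ⟨J, rfl⟩ := h
        exact ⟨J, fun Q hQ hd => hI Q hQ (hd.mul_left P), rfl⟩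
      · left
        intro Q hQ
        rcases Finset.mem_insert.1 hQ with rfl | hQ
        · exact h
        · exact hI Q hQ
    have h1 : ∑' I : goodIdeals S, w I ≤ ∑' I : goodIdeals (insert P S), w I +
        2⁻¹ * ∑' I : goodIdeals S, w I := by
      calc ∑' I : goodIdeals S, w I 
          ≤ ∑' I : ↥(goodIdeals (insert P S) ∪ (fun J => P * J) '' goodIdeals S), w I :=
            ENNReal.tsum_mono_subtype w hsub
        _ ≤ _ + ∑' I : ↥((fun J => P * J) '' goodIdeals S), w I := ENNReal.tsum_union_le w _ _
        _ ≤ _ + 2⁻¹ * ∑' I : goodIdeals S, w I := by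
          gcongr
          have hsurj : Function.Surjective (fun J : goodIdeals S =>
            (⟨P * J.1, ⟨J.1, J.2, rfl⟩⟩ : ↥((fun J => P * J) '' goodIdeals S))) := by
            rintro ⟨_, J, hJ, rfl⟩
            exact ⟨⟨J, hJ⟩, rfl⟩
          refine (ENNReal.tsum_le_tsum_comp_of_surjective hsurj _).trans ?_
          rw [← ENNReal.tsum_mul_left]
          refine ENNReal.tsum_le_tsum fun J => ?_
          simp only [hwmul]
          gcongr
          exact hwP P (hS P (Finset.mem_insert_self _ _))
    clear ih
    generalize (∑' I : goodIdeals S, w I) = Z at *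
    generalize (∑' I : goodIdeals (insert P S), w I) = Z' at *
    rcases eq_or_ne Z' ⊤ with h | h
    · rw [h]; simp
    · lift Z to NNReal using hZfin
      lift Z' to NNReal using h
      have h22 : (2⁻¹ : ENNReal) = ((2⁻¹ : NNReal) : ENNReal) := by
        rw [ENNReal.coe_inv (by norm_num)]; simp
      rw [h22] at h1
      norm_cast at h1 ⊢
      have h3 : (Z : ℝ) ≤ Z' + 2⁻¹ * Z := by exact_mod_cast h1
      have : (Z : ℝ) ≤ 2 * Z' := by linarith
      exact_mod_cast this

open UniqueFactorizationMonoid in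
lemma inj_bound {K L : Type*} [Field K] [NumberField K] [Field L] [NumberField L] [Algebra K L]
    (x : ℝ) (S : Finset (Ideal (𝓞 K))) (hbot : ⊥ ∈ S)
    (q q' : Ideal (𝓞 K) → Ideal (𝓞 L))
    (h : ∀ P : Ideal (𝓞 K), P.IsPrime → P ∉ S → (q P).IsPrime ∧ (q' P).IsPrime ∧ q P ≠ q' P ∧
      (q P).comap (algebraMap (𝓞 K) (𝓞 L)) = P ∧ (q' P).comap (algebraMap (𝓞 K) (𝓞 L)) = P ∧
      Ideal.absNorm (q P) = Ideal.absNorm P ∧ Ideal.absNorm (q' P) = Ideal.absNorm P) :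
    (∑' I : goodIdeals S, ENNReal.ofReal ((Ideal.absNorm I.1 : ℝ) ^ (-x))) *
     (∑' I : goodIdeals S, ENNReal.ofReal ((Ideal.absNorm I.1 : ℝ) ^ (-x))) ≤
     ∑' I : Ideal (𝓞 L), ENNReal.ofReal ((Ideal.absNorm I : ℝ) ^ (-x)) := by
  classical
  have hne : ∀ I ∈ goodIdeals S, I ≠ ⊥ := by
    rintro I hI rfl
    exact hI ⊥ hbot dvd_rfl
  have hfac : ∀ I ∈ goodIdeals S, ∀ P ∈ normalizedFactors I, P.IsPrime ∧ P ∉ S := by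
    intro I hI P hP
    refine ⟨Ideal.isPrime_of_prime (prime_of_normalized_factor P hP), fun hPS => ?_⟩
    exact hI P hPS (dvd_of_mem_normalizedFactors hP)
  have hq0 : ∀ P : Ideal (𝓞 K), P.IsPrime → P ∉ S → Prime (q P) ∧ Prime (q' P) := by
    intro P hP hPS
    have hP0 : P ≠ ⊥ := fun h => hPS (h ▸ hbot)
    obtain ⟨h1, h2, -, -, -, h3, h4⟩ := h P hP hPS
    have hn : Ideal.absNorm P ≠ 0 := fun h => hP0 (Ideal.absNorm_eq_zero_iff.1 h)
    exact ⟨Ideal.prime_of_isPrime (fun h => hn (by rw [← h3, h]; simp)) h1,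
      Ideal.prime_of_isPrime (fun h => hn (by rw [← h4, h]; simp)) h2⟩
  let g : Ideal (𝓞 K) → Ideal (𝓞 L) := fun I => ((normalizedFactors I).map q).prod
  let g' : Ideal (𝓞 K) → Ideal (𝓞 L) := fun I => ((normalizedFactors I).map q').prod
  have hprod : ∀ I ∈ goodIdeals S, (normalizedFactors I).prod = I := fun I hI =>
    associated_iff_eq.1 (prod_normalizedFactors (hne I hI))
  have hNgen : ∀ r : Ideal (𝓞 K) → Ideal (𝓞 L), (∀ P : Ideal (𝓞 K), P.IsPrime → P ∉ S →
      Ideal.absNorm (r P) = Ideal.absNorm P) → ∀ I ∈ goodIdeals S, 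
      Ideal.absNorm ((normalizedFactors I).map r).prod = Ideal.absNorm I := by
    intro r hr I hI
    conv_rhs => rw [← hprod I hI]
    rw [map_multiset_prod, map_multiset_prod, Multiset.map_map]
    congr 1
    apply Multiset.map_congr rfl
    intro P hP
    exact hr P (hfac I hI P hP).1 (hfac I hI P hP).2
  have hN : ∀ I ∈ goodIdeals S, Ideal.absNorm (g I) = Ideal.absNorm I :=
    hNgen q (fun P hP hPS => (h P hP hPS).2.2.2.2.2.1)
  have hN' : ∀ I ∈ goodIdeals S, Ideal.absNorm (g' I) = Ideal.absNorm I :=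
    hNgen q' (fun P hP hPS => (h P hP hPS).2.2.2.2.2.2)
  have hnf : ∀ I ∈ goodIdeals S, ∀ J ∈ goodIdeals S, normalizedFactors (g I * g' J) =
      (normalizedFactors I).map q + (normalizedFactors J).map q' := by
    intro I hI J hJ
    rw [← Multiset.prod_add]
    apply normalizedFactors_prod_of_prime
    intro Q hQ
    rcases Multiset.mem_add.1 hQ with hQ | hQ
    · obtain ⟨P, hP, rfl⟩ := Multiset.mem_map.1 hQ
      exact (hq0 P (hfac I hI P hP).1 (hfac I hI P hP).2).1
    · obtain ⟨P, hP, rfl⟩ := Multiset.mem_map.1 hQ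
      exact (hq0 P (hfac J hJ P hP).1 (hfac J hJ P hP).2).2
  let p : Ideal (𝓞 L) → Prop := fun Q => ∃ P : Ideal (𝓞 K), P.IsPrime ∧ P ∉ S ∧ Q = q P
  let cm : Ideal (𝓞 L) → Ideal (𝓞 K) := fun Q => Q.comap (algebraMap (𝓞 K) (𝓞 L))
  have hp1 : ∀ P : Ideal (𝓞 K), P.IsPrime → P ∉ S → p (q P) := fun P h1 h2 => ⟨P, h1, h2, rfl⟩
  have hp2 : ∀ P : Ideal (𝓞 K), P.IsPrime → P ∉ S → ¬ p (q' P) := by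
    rintro P h1 h2 ⟨P', h3, h4, h5⟩
    have e1 := (h P h1 h2).2.2.2.2.1
    have e2 := (h P' h3 h4).2.2.2.1
    have : P = P' := by rw [← e1, h5, e2]
    subst this
    exact (h P h1 h2).2.2.1 h5.symm
  have hA : ∀ I ∈ goodIdeals S, ∀ J ∈ goodIdeals S,
      ((normalizedFactors (g I * g' J)).filter p).map cm = normalizedFactors I := by
    intro I hI J hJ
    rw [hnf I hI J hJ, Multiset.filter_add, Multiset.filter_eq_self.2, Multiset.filter_eq_nil.2,
      add_zero, Multiset.map_map]
    · conv_rhs => rw [← Multiset.map_id (normalizedFactors I)]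
      apply Multiset.map_congr rfl
      intro P hP
      exact (h P (hfac I hI P hP).1 (hfac I hI P hP).2).2.2.2.1
    · intro Q hQ
      obtain ⟨P, hP, rfl⟩ := Multiset.mem_map.1 hQ
      exact hp2 P (hfac J hJ P hP).1 (hfac J hJ P hP).2
    · intro Q hQ
      obtain ⟨P, hP, rfl⟩ := Multiset.mem_map.1 hQ
      exact hp1 P (hfac I hI P hP).1 (hfac I hI P hP).2
  have hB : ∀ I ∈ goodIdeals S, ∀ J ∈ goodIdeals S,
      ((normalizedFactors (g I * g' J)).filter (fun Q => ¬ p Q)).map cm = normalizedFactors J := by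
    intro I hI J hJ
    rw [hnf I hI J hJ, Multiset.filter_add, Multiset.filter_eq_nil.2, Multiset.filter_eq_self.2,
      zero_add, Multiset.map_map]
    · conv_rhs => rw [← Multiset.map_id (normalizedFactors J)]
      apply Multiset.map_congr rfl
      intro P hP
      exact (h P (hfac J hJ P hP).1 (hfac J hJ P hP).2).2.2.2.2.1
    · intro Q hQ
      obtain ⟨P, hP, rfl⟩ := Multiset.mem_map.1 hQ
      exact hp2 P (hfac J hJ P hP).1 (hfac J hJ P hP).2
    · intro Q hQ
      obtain ⟨P, hP, rfl⟩ := Multiset.mem_map.1 hQ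
      exact not_not.2 (hp1 P (hfac I hI P hP).1 (hfac I hI P hP).2)
  have hinj : Function.Injective (fun z : goodIdeals S × goodIdeals S => g z.1.1 * g' z.2.1) := by
    rintro ⟨⟨I, hI⟩, ⟨J, hJ⟩⟩ ⟨⟨I', hI'⟩, ⟨J', hJ'⟩⟩ heq
    simp only at heq
    have e1 := hA I hI J hJ
    have e2 := hB I hI J hJ
    rw [heq] at e1 e2
    rw [hA I' hI' J' hJ'] at e1
    rw [hB I' hI' J' hJ'] at e2
    have f1 : I = I' := by rw [← hprod I hI, ← hprod I' hI', e1]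
    have f2 : J = J' := by rw [← hprod J hJ, ← hprod J' hJ', e2]
    subst f1; subst f2; rfl
  refine le_trans (le_of_eq ?_) (ENNReal.tsum_comp_le_tsum_of_injective hinj _)
  rw [ENNReal.tsum_prod', ← ENNReal.tsum_mul_right]
  refine tsum_congr fun I => ?_
  rw [← ENNReal.tsum_mul_left]
  refine tsum_congr fun J => ?_
  rw [map_mul, hN _ I.2, hN' _ J.2, Nat.cast_mul, Real.mul_rpow (Nat.cast_nonneg _) (Nat.cast_nonneg _),
      ENNReal.ofReal_mul (by positivity)]

open Filter Topology in
lemma exists_inert {K : Type*} [Field K] [NumberField K] (D : 𝓞 K)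
    (hD : ¬ IsSquare (algebraMap (𝓞 K) K D)) (B : 𝓞 K) (hB : B ≠ 0) :
    ∃ P : Ideal (𝓞 K), P.IsPrime ∧ P ≠ ⊥ ∧ B ∉ P ∧ (2 : 𝓞 K) ∉ P ∧ D ∉ P ∧ ¬ ∃ d, D - d * d ∈ P := by
  classical
  by_contra! H
  have hD0 : D ≠ 0 := by
    rintro rfl
    exact hD ⟨0, by simp⟩
  obtain ⟨L, _, _, _, e, σ, h2, he, hσ⟩ := quad_ext D hD
  let M : 𝓞 K := B * 2 * D
  have hM : M ≠ 0 := mul_ne_zero (mul_ne_zero hB two_ne_zero) hD0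
  let S : Finset (Ideal (𝓞 K)) :=
    insert ⊥ (UniqueFactorizationMonoid.normalizedFactors (Ideal.span {M})).toFinset
  have hbot : ⊥ ∈ S := Finset.mem_insert_self _ _
  have hStop : ∀ P ∈ S, P ≠ ⊤ := by
    intro P hP
    rcases Finset.mem_insert.1 hP with rfl | hP
    · exact bot_ne_top
    · rw [Multiset.mem_toFinset] at hP
      exact (Ideal.isPrime_of_prime (UniqueFactorizationMonoid.prime_of_normalized_factor P hP)).ne_top
  have hMP : ∀ P : Ideal (𝓞 K), P.IsPrime → P ∉ S → M ∉ P := by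
    intro P hP hPS hMP
    apply hPS
    have hP0 : P ≠ ⊥ := fun h => hPS (h ▸ hbot)
    refine Finset.mem_insert_of_mem ?_
    rw [Multiset.mem_toFinset, UniqueFactorizationMonoid.mem_normalizedFactors_iff
      (by simpa using hM)]
    exact ⟨Ideal.prime_of_isPrime hP0 hP, Ideal.dvd_span_singleton.2 hMP⟩
  have hsplit : ∀ P : Ideal (𝓞 K), ∃ Q Q' : Ideal (𝓞 L), P.IsPrime → P ∉ S → 
      Q.IsPrime ∧ Q'.IsPrime ∧ Q ≠ Q' ∧
      Q.comap (algebraMap (𝓞 K) (𝓞 L)) = P ∧ Q'.comap (algebraMap (𝓞 K) (𝓞 L)) = P ∧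
      Ideal.absNorm Q = Ideal.absNorm P ∧ Ideal.absNorm Q' = Ideal.absNorm P := by
    intro P
    by_cases hP : P.IsPrime ∧ P ∉ S
    · obtain ⟨hP, hPS⟩ := hP
      have hm := hMP P hP hPS
      have hP0 : P ≠ ⊥ := fun h => hPS (h ▸ hbot)
      have a1 : B ∉ P := fun h => hm (P.mul_mem_right _ (P.mul_mem_right _ h))
      have a2 : (2 : 𝓞 K) ∉ P := fun h => hm (P.mul_mem_right _ (P.mul_mem_left _ h))
      have a3 : D ∉ P := fun h => hm (P.mul_mem_left _ h)
      obtain ⟨Q, Q', hQ⟩ := split_primes h2 D e he σ hσ P hP hP0 a2 a3 (H P hP hP0 a1 a2 a3)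
      exact ⟨Q, Q', fun _ _ => hQ⟩
    · exact ⟨⊥, ⊥, fun h1 h2 => absurd ⟨h1, h2⟩ hP⟩
  choose q q' hq using hsplit
  obtain ⟨c, _, hc, -, hK⟩ := zeta_bounds K
  obtain ⟨_, C, -, hC, hL⟩ := zeta_bounds L
  have hK' : ∀ᶠ x : ℝ in 𝓝[>] 1,
      ∑' I : Ideal (𝓞 K), ENNReal.ofReal ((Ideal.absNorm I : ℝ) ^ (-x)) ≠ ⊤ := by
    obtain ⟨_, C', -, -, hK'⟩ := zeta_bounds K
    filter_upwards [hK'] with x hx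
    exact ne_top_of_le_ne_top ENNReal.ofReal_ne_top hx.2
  let N : ℝ := 2 ^ S.card
  have hNpos : 0 < N := by positivity
  have hsmall : ∀ᶠ x : ℝ in 𝓝[>] 1, x < 1 + c ^ 2 / (N ^ 2 * C) := by
    apply mem_nhdsWithin_of_mem_nhds
    apply gt_mem_nhds
    have : 0 < c ^ 2 / (N ^ 2 * C) := by positivity
    linarith
  have hgt : ∀ᶠ x : ℝ in 𝓝[>] 1, 1 < x := self_mem_nhdsWithin
  obtain ⟨x, h1, h2, h3, h4, h5⟩ := (hK.and (hL.and (hK'.and (hsmall.and hgt)))).exists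
  have r := removal x h5 h3 S hStop
  have i := inj_bound x S hbot q q' hq
  have hx : 0 < x - 1 := by linarith
  have r' := h1.1.trans r
  have i' := i.trans h2.2
  generalize (∑' I : goodIdeals S, ENNReal.ofReal ((Ideal.absNorm I.1 : ℝ) ^ (-x))) = Z at r' i'
  have hmul := mul_le_mul' r' r'
  have : ENNReal.ofReal (c / (x - 1)) * ENNReal.ofReal (c / (x - 1)) ≤
      ENNReal.ofReal (N * N * (C / (x - 1))) := by
    refine hmul.trans ?_
    rw [ENNReal.ofReal_mul (by positivity), ENNReal.ofReal_mul (by positivity)]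
    have hNN : ENNReal.ofReal N = 2 ^ S.card := by
      simp only [N]; rw [ENNReal.ofReal_pow (by norm_num)]; simp
    rw [hNN]
    calc _ = 2 ^ S.card * 2 ^ S.card * (Z * Z) := by ring
      _ ≤ _ := by gcongr
  rw [← ENNReal.ofReal_mul (by positivity), ENNReal.ofReal_le_ofReal_iff (by positivity)] at this
  have h6 : c ^ 2 / (N ^ 2 * C) ≤ x - 1 := by
    rw [div_le_iff₀ (by positivity)]
    have h7 := mul_le_mul_of_nonneg_right this (by positivity : 0 ≤ (x-1)*(x-1))
    have e1 : c / (x - 1) * (c / (x - 1)) * ((x-1)*(x-1)) = c ^ 2 := by field_simp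
    have e2 : N * N * (C / (x - 1)) * ((x-1)*(x-1)) = (x - 1) * (N ^ 2 * C) := by field_simp
    rw [e1, e2] at h7
    exact h7
  linarith

/-- **Corollary 19 (uniqueness for order-two recurrences).**  Let `K` be a number field,
`s, π ∈ 𝓞 K` with `s ≠ 0` and `Δ = s² - 4π` not a square in `K`.  If two sequences
`U, V : ℕ → 𝓞 K` of class `C = X² - sX + π` satisfy `U_p ≡ V_p (mod P)` for every prime
`P` of `𝓞 K` with `Δ ∉ P` (where `p = |𝓞 K / P|`), then `U = V`. -/
theorem order_two_sequences_unique_from_prime_congruences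
    {K : Type*} [Field K] [NumberField K]
    (s π : 𝓞 K) (hs : s ≠ 0) (Δ : 𝓞 K) (hΔdef : Δ = s ^ 2 - 4 * π)
    (hΔ : ¬ IsSquare (algebraMap (𝓞 K) K Δ))
    (U V : ℕ → 𝓞 K)
    (hU : ∀ n : ℕ, U (n + 2) - s * U (n + 1) + π * U n = 0)
    (hV : ∀ n : ℕ, V (n + 2) - s * V (n + 1) + π * V n = 0)
    (hcong : ∀ P : Ideal (𝓞 K), P.IsPrime → P ≠ ⊥ → Δ ∉ P →
      U (Nat.card (𝓞 K ⧸ P)) - V (Nat.card (𝓞 K ⧸ P)) ∈ P) :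
    ∀ n : ℕ, U n = V n := by
  subst hΔdef
  have hD0 : s ^ 2 - 4 * π ≠ 0 := by
    intro h
    apply hΔ
    rw [h]
    exact ⟨0, by simp⟩
  let W : ℕ → 𝓞 K := fun n => U n - V n
  have hW : ∀ n : ℕ, W (n + 2) - s * W (n + 1) + π * W n = 0 := by
    intro n
    simp only [W]
    linear_combination hU n - hV n
  have h1 : W 1 = 0 := W1_zero s π W hW hD0 hcong
  have h0 : W 0 = 0 := by
    by_contra h0
    obtain ⟨P, hP, hP0, hB, h2, hD, hsq⟩ :=
      exists_inert (s ^ 2 - 4 * π) hΔ (s * W 0) (mul_ne_zero hs h0)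
    rcases prime_seq s π W hW P hP hP0 h2 hD (hcong P hP hP0 hD) with ⟨h, _⟩ | ⟨_, h⟩
    · exact hsq h
    · rw [h1, sub_zero] at h
      exact hB h
  have hall : ∀ n, W n = 0 ∧ W (n + 1) = 0 := by
    intro n
    induction n with
    | zero => exact ⟨h0, h1⟩
    | succ n ih =>
      refine ⟨ih.2, ?_⟩
      have := hW n
      rw [ih.1, ih.2] at this
      simpa using this
  intro n
  exact sub_eq_zero.1 (hall n).1
end

section
/- Let M ≥ 1 and n ∈ ℕ, and let d := gcd(n, M). Then the sum over all primitive M-th roots of unity z in ℂ of z^n equals (φ(M)/φ(M/d))·μ(M/d), where φ is Euler's totient function and μ is the Möbius function. In particular (d = M, i.e. M ∣ n) the sum equals φ(M); if gcd(n, M) = 1 the sum equals μ(M). -/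
open Finset in
lemma aux_sum_divisors (n : ℕ) (hn : n > 0) :
    ∑ i ∈ n.divisors, ∑ z ∈ primitiveRoots i ℂ, z = if n = 1 then (1 : ℂ) else 0 := by
  have hζ := Complex.isPrimitiveRoot_exp n hn.ne'
  have : NeZero n := ⟨hn.ne'⟩
  generalize Complex.exp (2 * Real.pi * Complex.I / n) = ζ at hζ
  rw [← sum_biUnion (fun i _ j _ hij => IsPrimitiveRoot.disjoint hij),
    ← IsPrimitiveRoot.nthRoots_one_eq_biUnion_primitiveRoots]
  have himg : Polynomial.nthRootsFinset n (1 : ℂ) = (range n).image (fun i => ζ ^ i) := by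
    ext x
    rw [Polynomial.mem_nthRootsFinset hn, mem_image]
    constructor
    · intro hx
      obtain ⟨i, hi, h⟩ := hζ.eq_pow_of_pow_eq_one hx
      exact ⟨i, mem_range.2 hi, h⟩
    · rintro ⟨i, _, rfl⟩
      rw [← pow_mul, mul_comm, pow_mul, hζ.pow_eq_one, one_pow]
  rw [himg, sum_image (fun i hi j hj h => hζ.pow_inj (by simpa using hi) (by simpa using hj) h)]
  split_ifs with h1
  · subst h1; simp
  · exact hζ.geom_sum_eq_zero (by omega)

lemma aux_sum_primitiveRoots (n : ℕ) (hn : n > 0) :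
    ∑ z ∈ primitiveRoots n ℂ, z = ((ArithmeticFunction.moebius n : ℤ) : ℂ) := by
  have h1 := (ArithmeticFunction.sum_eq_iff_sum_mul_moebius_eq
    (f := fun i => ∑ z ∈ primitiveRoots i ℂ, z) (g := fun n => if n = 1 then (1 : ℂ) else 0)).1
    aux_sum_divisors n hn
  have h2 := (ArithmeticFunction.sum_eq_iff_sum_mul_moebius_eq
    (f := fun i => ((ArithmeticFunction.moebius i : ℤ) : ℂ))
    (g := fun n => if n = 1 then (1 : ℂ) else 0)).1 (by
      intro m _
      have := congrArg (fun f => f m)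
        (ArithmeticFunction.coe_zeta_mul_coe_moebius (R := ℂ))
      simp only [ArithmeticFunction.coe_zeta_mul_apply, ArithmeticFunction.one_apply,
        ArithmeticFunction.intCoe_apply] at this
      exact this) n hn
  exact h1.symm.trans h2

lemma aux_pow_primitive {M n : ℕ} (hM : 1 ≤ M) {z : ℂ} (hz : IsPrimitiveRoot z M) :
    IsPrimitiveRoot (z ^ n) (M / Nat.gcd n M) := by
  have hf : IsOfFinOrder z := isOfFinOrder_iff_pow_eq_one.2 ⟨M, hM, hz.pow_eq_one⟩
  have := IsOfFinOrder.orderOf_pow z n hf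
  rw [← hz.eq_orderOf, Nat.gcd_comm] at this
  exact IsPrimitiveRoot.iff_orderOf.2 this

lemma aux_fiber_le {M n e : ℕ} (hM : 1 ≤ M) (he : e ∣ M) {w w' : ℂ}
    (hw : IsPrimitiveRoot w e) (hw' : IsPrimitiveRoot w' e) :
    ((primitiveRoots M ℂ).filter (fun z => z ^ n = w)).card ≤
      ((primitiveRoots M ℂ).filter (fun z => z ^ n = w')).card := by
  have : NeZero M := ⟨by omega⟩
  have : NeZero e := ⟨fun h => by subst h; simp at he; omega⟩
  obtain ⟨i, hi, hc, hwi⟩ := hw.isPrimitiveRoot_iff.1 hw'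
  obtain ⟨u, hu⟩ := ZMod.unitsMap_surjective he (ZMod.unitOfCoprime i hc)
  have hk : (u : ZMod M).val.Coprime M := ZMod.val_coe_unit_coprime u
  have hmod : (u : ZMod M).val ≡ i [MOD e] := by
    have := congrArg Units.val hu
    rw [ZMod.unitsMap_val, ZMod.coe_unitOfCoprime, ZMod.cast_eq_val] at this
    exact (ZMod.natCast_eq_natCast_iff _ _ _).1 this
  have hpow : w ^ (u : ZMod M).val = w' := by
    rw [pow_eq_pow_of_modEq hmod hw.pow_eq_one, hwi]
  generalize (u : ZMod M).val = k at hk hpow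
  refine Finset.card_le_card_of_injOn (fun z => z ^ k) ?_ ?_
  · intro z hz
    simp only [Finset.coe_filter, Set.mem_ofPred_eq, mem_primitiveRoots (show 0 < M from hM)]
      at hz ⊢
    refine ⟨hz.1.pow_of_coprime k hk, ?_⟩
    rw [← pow_mul, mul_comm, pow_mul, hz.2, hpow]
  · intro x hx y hy hxy
    simp only [Finset.coe_filter, Set.mem_ofPred_eq] at hx hy
    have := (IsPrimitiveRoot.primitiveRootsPowEquivOfCoprime (R := ℂ) hk).injective
      (a₁ := ⟨x, hx.1⟩) (a₂ := ⟨y, hy.1⟩) (Subtype.ext (by simpa using hxy))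
    exact congrArg Subtype.val this

lemma aux_main (M n : ℕ) (hM : 1 ≤ M) :
    (∑ z ∈ primitiveRoots M ℂ, z ^ n) =
      ((M.totient / (M / Nat.gcd n M).totient : ℕ) : ℂ) *
        ((ArithmeticFunction.moebius (M / Nat.gcd n M) : ℤ) : ℂ) := by
  have he : M / Nat.gcd n M ∣ M := Nat.div_dvd_of_dvd (Nat.gcd_dvd_right n M)
  have hmap : ∀ z ∈ primitiveRoots M ℂ, z ^ n ∈ primitiveRoots (M / Nat.gcd n M) ℂ := by
    intro z hz
    rw [mem_primitiveRoots (Nat.pos_of_dvd_of_pos he hM)]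
    exact aux_pow_primitive hM ((mem_primitiveRoots hM).1 hz)
  generalize M / Nat.gcd n M = e at he hmap
  have hpos : 0 < e := Nat.pos_of_dvd_of_pos he hM
  have hζ := Complex.isPrimitiveRoot_exp e hpos.ne'
  generalize Complex.exp (2 * Real.pi * Complex.I / e) = ζ at hζ
  have hcard : ∀ w ∈ primitiveRoots e ℂ,
      ((primitiveRoots M ℂ).filter (fun z => z ^ n = w)).card =
      ((primitiveRoots M ℂ).filter (fun z => z ^ n = ζ)).card := by
    intro w hw
    rw [mem_primitiveRoots hpos] at hw
    exact le_antisymm (aux_fiber_le hM he hw hζ) (aux_fiber_le hM he hζ hw)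
  have hφ := Finset.card_eq_sum_card_fiberwise (f := fun z : ℂ => z ^ n)
    (s := primitiveRoots M ℂ) (t := primitiveRoots e ℂ) hmap
  rw [Finset.sum_congr rfl hcard, Finset.sum_const,
    (Complex.isPrimitiveRoot_exp M (by omega)).card_primitiveRoots,
    hζ.card_primitiveRoots, smul_eq_mul] at hφ
  rw [hφ, Nat.mul_div_cancel_left _ (Nat.totient_pos.2 hpos), ← aux_sum_primitiveRoots e hpos,
    ← Finset.sum_fiberwise_of_maps_to hmap, Finset.mul_sum]
  refine Finset.sum_congr rfl fun w hw => ?_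
  rw [← hcard w hw, Finset.sum_congr rfl (g := fun _ => w)
    (fun z hz => (Finset.mem_filter.1 hz).2), Finset.sum_const, nsmul_eq_mul]


/-- **Proposition 22 (gcd rule for cyclotomic Lucas sequences).**  For `M ≥ 1` and `n ∈ ℕ`,
with `d = gcd(n, M)`, the sum of `z^n` over all primitive `M`-th roots of unity `z` in `ℂ`
equals `(φ(M)/φ(M/d))·μ(M/d)`.  In particular if `M ∣ n` the sum is `φ(M)`, and if
`gcd(n, M) = 1` the sum is `μ(M)`. -/
theorem sum_primitive_roots_pow_eq_totient_ratio_mul_moebius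
    (M n : ℕ) (hM : 1 ≤ M) :
    (∑ z ∈ primitiveRoots M ℂ, z ^ n) =
      ((M.totient / (M / Nat.gcd n M).totient : ℕ) : ℂ) *
        ((ArithmeticFunction.moebius (M / Nat.gcd n M) : ℤ) : ℂ) ∧
    (M ∣ n → (∑ z ∈ primitiveRoots M ℂ, z ^ n) = (M.totient : ℂ)) ∧
    (Nat.gcd n M = 1 →
      (∑ z ∈ primitiveRoots M ℂ, z ^ n) = ((ArithmeticFunction.moebius M : ℤ) : ℂ)) := by
  refine ⟨aux_main M n hM, fun h => ?_, fun h => ?_⟩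
  · rw [aux_main M n hM, Nat.gcd_eq_right h, Nat.div_self hM]
    simp
  · rw [aux_main M n hM, h, Nat.div_one, Nat.div_self (Nat.totient_pos.2 hM)]
    simp
end

section
/- With the number-field setup below, let Λ be a conjugacy class of G := Gal(E/K) with λ := card(Λ), fix k with 0 ≤ k ≤ d−1, and define Ω_{Λ;k}(R) := ∏_{s∈Λ} (R − Ψ_k(s)) ∈ E[R], where Ψ_k(s) is the coefficient of X^k in Ψ_s. Then: (1) Ω_{Λ;k} is monic of degree λ, all its coefficients lie in K, and Δ_C^λ · Ω_{Λ;k} has all its coefficients in A; (2) as an element of K[R], Ω_{Λ;k} is either irreducible or a power of an irreducible polynomial. -/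
open Polynomial NumberField

theorem aux_unique {E : Type*} [Field E] {d : ℕ} (y : Fin d → E) (hy : Function.Injective y)
    (P Q : Polynomial E) (hP : P.degree < d) (hQ : Q.degree < d)
    (h : ∀ i, P.eval (y i) = Q.eval (y i)) : P = Q := by
  refine Polynomial.eq_of_degrees_lt_of_eval_index_eq (s := Finset.univ) (v := y)
    (hy.injOn) ?_ ?_ (fun i _ => h i)
  · simpa using hP
  · simpa using hQ

theorem aux_primepow {K E : Type*} [Field K] [Field E] [Algebra K E] [Algebra.IsIntegral K E]
    (ι : Type*) (Λ : Finset ι) (a : ι → E) (g : Polynomial K)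
    (hg : ∀ s ∈ Λ, minpoly K (a s) = g) (P : Polynomial K)
    (hP : P.map (algebraMap K E) = ∏ s ∈ Λ, (X - Polynomial.C (a s))) :
    ∃ m : ℕ, P = g ^ m := by
  classical
  have hmon : P.Monic := by
    refine Polynomial.monic_of_injective (algebraMap K E).injective ?_
    rw [hP]
    exact Polynomial.monic_prod_of_monic _ _ (fun s _ => Polynomial.monic_X_sub_C _)
  have hrep : UniqueFactorizationMonoid.normalizedFactors P =
      Multiset.replicate (Multiset.card (UniqueFactorizationMonoid.normalizedFactors P)) g := by
    rw [Multiset.eq_replicate]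
    refine ⟨rfl, fun p hp => ?_⟩
    have hirr := UniqueFactorizationMonoid.irreducible_of_normalized_factor p hp
    have hnorm := UniqueFactorizationMonoid.normalize_normalized_factor p hp
    have hdvd := UniqueFactorizationMonoid.dvd_of_mem_normalizedFactors hp
    have hpm : p.Monic := by
      rw [← hnorm]; exact Polynomial.monic_normalize hirr.ne_zero
    have hd2 : p.map (algebraMap K E) ∣ ∏ s ∈ Λ, (X - Polynomial.C (a s)) := by
      rw [← hP]; exact Polynomial.map_dvd _ hdvd
    have hne : (∏ s ∈ Λ, (X - Polynomial.C (a s))) ≠ 0 :=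
      (Polynomial.monic_prod_of_monic _ _ (fun s _ => Polynomial.monic_X_sub_C _)).ne_zero
    have hsp : (∏ s ∈ Λ, (X - Polynomial.C (a s))).Splits :=
      Polynomial.Splits.prod (fun s _ => Polynomial.Splits.X_sub_C _)
    have hsp2 := hsp.of_dvd hne hd2
    obtain ⟨r, hr⟩ := hsp2.exists_eval_eq_zero (by
      rw [Polynomial.degree_map]; exact hirr.degree_pos.ne')
    have hr2 : (∏ s ∈ Λ, (X - Polynomial.C (a s))).eval r = 0 :=
      Polynomial.eval_eq_zero_of_dvd_of_eval_eq_zero hd2 hr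
    rw [Polynomial.eval_prod, Finset.prod_eq_zero_iff] at hr2
    obtain ⟨s, hs, hs2⟩ := hr2
    have hrs : r = a s := by simpa [sub_eq_zero] using hs2
    rw [← hg s hs, ← hrs]
    refine minpoly.eq_of_irreducible_of_monic hirr ?_ hpm
    rwa [Polynomial.eval_map_algebraMap] at hr
  have hgm : P = 1 ∨ g.Monic := by
    rcases Λ.eq_empty_or_nonempty with h | ⟨s, hs⟩
    · left
      subst h
      apply Polynomial.map_injective _ (algebraMap K E).injective
      simpa using hP
    · right
      rw [← hg s hs]
      exact minpoly.monic (Algebra.IsIntegral.isIntegral _)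
  rcases hgm with h | hgm
  · exact ⟨0, by simpa using h⟩
  refine ⟨Multiset.card (UniqueFactorizationMonoid.normalizedFactors P), ?_⟩
  have h1 := UniqueFactorizationMonoid.prod_normalizedFactors hmon.ne_zero
  rw [hrep, Multiset.prod_replicate] at h1
  exact (Polynomial.eq_of_monic_of_associated (hgm.pow _) hmon h1).symm

theorem aux_dvd {R : Type*} [CommRing R] {d : ℕ} (x : Fin d → R) (i : Fin d) :
    ∏ j ∈ Finset.univ.erase i, (x i - x j) ∣
      ∏ q ∈ Finset.univ.filter (fun q : Fin d × Fin d => q.1 < q.2), (x q.1 - x q.2) ^ 2 := by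
  classical
  let f : Fin d → Fin d × Fin d := fun j => if i < j then (i, j) else (j, i)
  have hinj : Set.InjOn f (Finset.univ.erase i : Finset (Fin d)) := by
    intro a ha b hb hab
    simp only [f] at hab
    simp at ha hb
    split_ifs at hab <;> simp_all
  have h1 : ∏ q ∈ (Finset.univ.erase i).image f, (x q.1 - x q.2) ^ 2 ∣
      ∏ q ∈ Finset.univ.filter (fun q : Fin d × Fin d => q.1 < q.2), (x q.1 - x q.2) ^ 2 := by
    apply Finset.prod_dvd_prod_of_subset
    intro q hq
    simp only [Finset.mem_image, Finset.mem_erase] at hq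
    obtain ⟨j, ⟨hj, -⟩, rfl⟩ := hq
    simp only [f, Finset.mem_filter, Finset.mem_univ, true_and]
    split_ifs with h
    · exact h
    · exact lt_of_le_of_ne (not_lt.mp h) hj
  refine dvd_trans ?_ h1
  rw [Finset.prod_image hinj]
  apply Finset.prod_dvd_prod_of_dvd
  intro j _
  simp only [f]
  split_ifs
  · exact Dvd.intro_left _ (pow_succ _ 1).symm
  · exact ⟨x i - x j, by ring⟩

theorem aux_degree {E : Type*} [Field E] (a : E) (P : Polynomial E) :
    (Polynomial.C a * P).degree ≤ P.degree := by
  rw [← Polynomial.smul_eq_C_mul]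
  exact Polynomial.degree_smul_le _ _

theorem aux_integral {R E : Type*} [CommRing R] [Field E] [Algebra R E]
    {d : ℕ} (x : Fin d → R)
    (hx : Function.Injective fun i => algebraMap R E (x i)) (D : R)
    (hD : ∀ i, ∏ j ∈ Finset.univ.erase i, (x i - x j) ∣ D) (z : Fin d → R)
    (P : Polynomial E) (hP : P.degree < d)
    (hev : ∀ i, P.eval (algebraMap R E (x i)) = algebraMap R E (z i)) :
    ∃ Q : Polynomial R, Q.map (algebraMap R E) = Polynomial.C (algebraMap R E D) * P := by
  classical
  choose c hc using hD
  refine ⟨∑ i, Polynomial.C (z i * c i) * ∏ j ∈ Finset.univ.erase i, (X - Polynomial.C (x j)), ?_⟩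
  refine aux_unique _ hx _ _ ?_ ?_ ?_
  · simp only [Polynomial.map_sum, Polynomial.map_mul, Polynomial.map_prod, Polynomial.map_sub,
      Polynomial.map_X, Polynomial.map_C]
    refine (Polynomial.degree_sum_le _ _).trans_lt ?_
    refine (Finset.sup_lt_iff (WithBot.bot_lt_coe d)).mpr ?_
    intro i _
    refine (aux_degree _ _).trans_lt ?_
    rw [Polynomial.degree_prod]
    simp only [Polynomial.degree_X_sub_C]
    have : 0 < d := i.pos
    simp [Finset.card_erase_of_mem]
    exact WithBot.coe_lt_coe.mpr (Nat.sub_lt this one_pos)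
  · exact (aux_degree _ _).trans_lt hP
  · intro i
    rw [Polynomial.eval_mul, Polynomial.eval_C, hev, Polynomial.eval_map_apply, ← map_mul]
    congr 1
    rw [Polynomial.eval_finsetSum, Finset.sum_eq_single i]
    · rw [Polynomial.eval_mul, Polynomial.eval_C, Polynomial.eval_prod]
      simp only [Polynomial.eval_sub, Polynomial.eval_X, Polynomial.eval_C]
      conv_rhs => rw [hc i]
      ring
    · intro b _ hb
      rw [Polynomial.eval_mul, Polynomial.eval_prod,
        Finset.prod_eq_zero (i := i) (by simp [hb.symm]) (by simp), mul_zero]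
    · simp

/-- **Theorem 24, points 1 & 2 (conjugacy class polynomials).**  Set-up: `E/K` Galois
extension of number fields, `C ∈ 𝓞 K [X]` monic of degree `d ≥ 2` with distinct roots
`x₁,…,x_d ∈ 𝓞 E` generating `E/K`, `Δ = ∏_{i<j}(xᵢ-xⱼ)² ∈ 𝓞 K`; for `s ∈ Gal(E/K)`,
`Ψ_s ∈ E[X]` is the root-permuting polynomial, `Ψ_k(s)` its coefficient of `X^k`.
Let `Λ` be a conjugacy class of `Gal(E/K)`, `λ = card Λ`, and for `0 ≤ k ≤ d-1` put
`Ω_{Λ;k}(R) = ∏_{s∈Λ} (R - Ψ_k(s))`.  Then: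
(1) `Ω_{Λ;k}` is monic of degree `λ`, with all coefficients in `K`, and `Δ^λ·Ω_{Λ;k}` has
all coefficients in `𝓞 K`;
(2) viewed in `K[R]`, `Ω_{Λ;k}` is irreducible or a power of an irreducible polynomial. -/
theorem conjugacy_class_polynomial_integrality_and_irreducibility
    {K E : Type*} [Field K] [NumberField K] [Field E] [NumberField E]
    [Algebra K E] [IsGalois K E]
    (d : ℕ) (hd : 2 ≤ d)
    (C : Polynomial (𝓞 K)) (hC : C.Monic) (hdeg : C.natDegree = d)
    (x : Fin d → 𝓞 E) (hxinj : Function.Injective x)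
    (hsplit : C.map (algebraMap (𝓞 K) (𝓞 E)) = ∏ i, (X - Polynomial.C (x i)))
    (hgen : IntermediateField.adjoin K
      (Set.range fun i => (algebraMap (𝓞 E) E (x i))) = ⊤)
    (Δ : 𝓞 K)
    (hΔ : algebraMap (𝓞 K) (𝓞 E) Δ =
      ∏ q ∈ Finset.univ.filter (fun q : Fin d × Fin d => q.1 < q.2), (x q.1 - x q.2) ^ 2)
    (Ψ : (E ≃ₐ[K] E) → Polynomial E)
    (hΨdeg : ∀ σ : E ≃ₐ[K] E, (Ψ σ).degree < d)
    (hΨeval : ∀ (σ : E ≃ₐ[K] E) (i : Fin d),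
      (Ψ σ).eval (algebraMap (𝓞 E) E (x i)) = σ (algebraMap (𝓞 E) E (x i)))
    (σ₀ : E ≃ₐ[K] E) (Λ : Finset (E ≃ₐ[K] E))
    (hΛ : ∀ τ : E ≃ₐ[K] E, τ ∈ Λ ↔ IsConj σ₀ τ)
    (k : ℕ) (hk : k < d) :
    ((∏ s ∈ Λ, (X - Polynomial.C ((Ψ s).coeff k))).Monic ∧
      (∏ s ∈ Λ, (X - Polynomial.C ((Ψ s).coeff k))).natDegree = Λ.card ∧
      (∀ m : ℕ, (∏ s ∈ Λ, (X - Polynomial.C ((Ψ s).coeff k))).coeff m ∈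
        (algebraMap K E).range) ∧
      (∀ m : ℕ, ∃ a : 𝓞 K, algebraMap (𝓞 K) E a =
        (algebraMap (𝓞 K) E Δ) ^ Λ.card *
          (∏ s ∈ Λ, (X - Polynomial.C ((Ψ s).coeff k))).coeff m)) ∧
    (∀ ΩK : Polynomial K,
      ΩK.map (algebraMap K E) = ∏ s ∈ Λ, (X - Polynomial.C ((Ψ s).coeff k)) →
      Irreducible ΩK ∨ ∃ (g : Polynomial K) (m : ℕ), Irreducible g ∧ ΩK = g ^ m) := by
  classical
  set y : Fin d → E := fun i => algebraMap (𝓞 E) E (x i) with hy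
  have hyinj : Function.Injective y :=
    (FaithfulSMul.algebraMap_injective (𝓞 E) E).comp hxinj
  -- the roots of C are permuted by the Galois group
  have hCE : C.map (algebraMap (𝓞 K) E) = ∏ i, (X - Polynomial.C (y i)) := by
    have h := congrArg (Polynomial.map (algebraMap (𝓞 E) E)) hsplit
    rw [Polynomial.map_map, ← IsScalarTower.algebraMap_eq, Polynomial.map_prod] at h
    simpa using h
  have hperm : ∀ (τ : E ≃ₐ[K] E) (j : Fin d), ∃ i, τ (y i) = y j := by
    intro τ j
    have h1 : (C.map (algebraMap (𝓞 K) E)).eval (τ.symm (y j)) = 0 := by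
      have h2 : (C.map (algebraMap (𝓞 K) E)).eval (y j) = 0 := by
        rw [hCE, Polynomial.eval_prod]
        exact Finset.prod_eq_zero (Finset.mem_univ j) (by simp)
      rw [IsScalarTower.algebraMap_eq (𝓞 K) K E, ← Polynomial.map_map,
        Polynomial.eval_map_algebraMap] at h2 ⊢
      rw [Polynomial.aeval_algHom_apply τ.symm, h2, map_zero]
    rw [hCE, Polynomial.eval_prod, Finset.prod_eq_zero_iff] at h1
    obtain ⟨i, -, hi⟩ := h1
    refine ⟨i, ?_⟩
    have : τ.symm (y j) = y i := by simpa [sub_eq_zero] using hi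
    rw [← this]; simp
  have hconj : ∀ τ s : E ≃ₐ[K] E,
      (Ψ s).map (τ : E →+* E) = Ψ (τ * s * τ⁻¹) := by
    intro τ s
    refine aux_unique y hyinj _ _ ((Polynomial.degree_map_le).trans_lt (hΨdeg s)) (hΨdeg _) ?_
    intro j
    rw [hΨeval]
    obtain ⟨i, hi⟩ := hperm τ j
    change _ = (τ * s * τ⁻¹) (y j)
    rw [← hi]
    have h3 := Polynomial.eval_map_apply (p := Ψ s) (f := (τ : E →+* E)) (x := y i)
    have h4 : (τ : E →+* E) (y i) = τ (y i) := rfl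
    rw [h4] at h3
    rw [h3, hΨeval s i]
    simp [AlgEquiv.mul_apply, hy]
  have hcoef : ∀ τ s : E ≃ₐ[K] E, τ ((Ψ s).coeff k) = (Ψ (τ * s * τ⁻¹)).coeff k := by
    intro τ s
    rw [← hconj, Polynomial.coeff_map]; rfl
  set Ω : Polynomial E := ∏ s ∈ Λ, (X - Polynomial.C ((Ψ s).coeff k)) with hΩ
  have hΩfix : ∀ τ : E ≃ₐ[K] E, Ω.map (τ : E →+* E) = Ω := by
    intro τ
    rw [hΩ, Polynomial.map_prod]
    refine Finset.prod_equiv (MulAut.conj τ).toEquiv ?_ ?_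
    · intro s
      rw [hΛ, hΛ]
      have : IsConj s ((MulAut.conj τ).toEquiv s) := isConj_iff.mpr ⟨τ, rfl⟩
      exact ⟨fun h => h.trans this, fun h => h.trans this.symm⟩
    · intro s _
      have := hcoef τ s
      simp only [Polynomial.map_sub, Polynomial.map_X, Polynomial.map_C]
      congr 2
  have hrange : ∀ m, Ω.coeff m ∈ (algebraMap K E).range := by
    intro m
    have : Ω.coeff m ∈ Set.range (algebraMap K E) := by
      rw [IsGalois.mem_range_algebraMap_iff_fixed]
      intro τ
      conv_rhs => rw [← hΩfix τ]
      rw [Polynomial.coeff_map]; rfl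
    exact this
  have hDE : algebraMap (𝓞 E) E (algebraMap (𝓞 K) (𝓞 E) Δ) = algebraMap (𝓞 K) E Δ :=
    (IsScalarTower.algebraMap_apply (𝓞 K) (𝓞 E) E Δ).symm
  have hint : ∀ s : E ≃ₐ[K] E, ∃ b : 𝓞 E, algebraMap (𝓞 E) E b =
      algebraMap (𝓞 K) E Δ * (Ψ s).coeff k := by
    intro s
    have hz : ∀ i, ∃ z : 𝓞 E, algebraMap (𝓞 E) E z = s (y i) := by
      intro i
      have : IsIntegral ℤ (s (y i)) :=
        (RingOfIntegers.isIntegral_coe (x i)).map (s.toAlgHom.restrictScalars ℤ)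
      exact ⟨⟨_, this⟩, rfl⟩
    choose z hz using hz
    obtain ⟨Q, hQ⟩ := aux_integral (E := E) x hyinj (algebraMap (𝓞 K) (𝓞 E) Δ)
      (fun i => hΔ ▸ aux_dvd x i) z (Ψ s) (hΨdeg s) (fun i => by rw [hΨeval, hz])
    refine ⟨Q.coeff k, ?_⟩
    rw [← Polynomial.coeff_map, hQ, Polynomial.coeff_C_mul, hDE]
  choose b hb using hint
  refine ⟨⟨?_, ?_, hrange, ?_⟩, ?_⟩
  · exact Polynomial.monic_prod_of_monic _ _ (fun s _ => Polynomial.monic_X_sub_C _)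
  · rw [hΩ, Polynomial.natDegree_prod_of_monic _ _ (fun s _ => Polynomial.monic_X_sub_C _)]
    simp
  · intro m
    obtain ⟨r, hr⟩ := hrange m
    have h1 : (∏ s ∈ Λ, (Polynomial.C (algebraMap (𝓞 K) (𝓞 E) Δ) * X - Polynomial.C (b s))).map
        (algebraMap (𝓞 E) E) = Polynomial.C (algebraMap (𝓞 K) E Δ ^ Λ.card) * Ω := by
      rw [hΩ, Polynomial.map_prod, Polynomial.C_pow, ← Finset.prod_const, ← Finset.prod_mul_distrib]
      refine Finset.prod_congr rfl fun s _ => ?_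
      rw [Polynomial.map_sub, Polynomial.map_mul, Polynomial.map_C, Polynomial.map_C,
        Polynomial.map_X, hDE, hb, Polynomial.C_mul]
      ring
    have h2 := congrArg (fun p => Polynomial.coeff p m) h1
    simp only [Polynomial.coeff_map, Polynomial.coeff_C_mul] at h2
    have h3 : algebraMap K E (algebraMap (𝓞 K) K Δ ^ Λ.card * r) =
        algebraMap (𝓞 K) E Δ ^ Λ.card * Ω.coeff m := by
      rw [map_mul, map_pow, hr, ← IsScalarTower.algebraMap_apply]
    have h4 : IsIntegral ℤ (algebraMap K E (algebraMap (𝓞 K) K Δ ^ Λ.card * r)) := by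
      rw [h3, ← h2]
      exact RingOfIntegers.isIntegral_coe _
    have h5 : IsIntegral ℤ (algebraMap (𝓞 K) K Δ ^ Λ.card * r) :=
      (isIntegral_algebraMap_iff (algebraMap K E).injective).mp h4
    obtain ⟨a, ha⟩ : ∃ a : 𝓞 K, algebraMap (𝓞 K) K a = algebraMap (𝓞 K) K Δ ^ Λ.card * r :=
      ⟨⟨_, h5⟩, rfl⟩
    refine ⟨a, ?_⟩
    rw [← h3, IsScalarTower.algebraMap_apply (𝓞 K) K E, ha]
  · intro ΩK hΩK
    right
    obtain ⟨m, hm⟩ := aux_primepow (K := K) (E := E) _ Λ (fun s => (Ψ s).coeff k)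
      (minpoly K ((Ψ σ₀).coeff k)) (by
        intro s hs
        obtain ⟨τ, hτ⟩ := isConj_iff.mp ((hΛ s).mp hs)
        have := hcoef τ σ₀
        rw [hτ] at this
        change minpoly K ((Ψ s).coeff k) = _
        rw [← this]
        exact minpoly.algEquiv_eq τ _) ΩK hΩK
    exact ⟨_, m, minpoly.irreducible (Algebra.IsIntegral.isIntegral _), hm⟩
end

section
/- With the number-field setup below, let Λ be a conjugacy class of Gal(E/K) with λ := card(Λ), and Ω_{Λ;k}(R) := ∏_{s∈Λ} (R − Ψ_k(s)) for 0 ≤ k ≤ d−1. Let P be a prime ideal of A with Δ_C ∉ P, set p := |A/P|, and suppose there exist a prime ideal Q of B lying above P and s ∈ Λ such that s(x) ≡ x^p (mod Q) for all x ∈ B. Let r_k(p) ∈ A be the coefficient of X^k in the remainder of the division of X^p by C in A[X]. Then for each k with 0 ≤ k ≤ d−1, Δ_C^λ · Ω_{Λ;k}(r_k(p)) ∈ P. -/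
open Polynomial NumberField

/-- The Cramer rule for the coefficients of a polynomial in terms of its values. -/
lemma coeff_mul_det_vandermonde {R : Type*} [CommRing R] {d : ℕ} (x : Fin d → R)
    (F : Polynomial R) (hF : F.degree < d) (k : Fin d) :
    (Matrix.vandermonde x).det * F.coeff k =
      ∑ i, (Matrix.vandermonde x).adjugate k i * F.eval (x i) := by
  have hv : (fun i => F.eval (x i)) =
      (Matrix.vandermonde x).mulVec (fun j : Fin d => F.coeff j) := by
    funext i
    have hdpos : 0 < d := lt_of_le_of_lt (Nat.zero_le _) k.2
    have hn : F.natDegree < d := by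
      by_cases h0 : F = 0
      · simpa [h0] using hdpos
      · exact (Polynomial.natDegree_lt_iff_degree_lt h0).2 hF
    rw [Polynomial.eval_eq_sum_range' hn, Finset.sum_range]
    simp [Matrix.mulVec, dotProduct, Matrix.vandermonde_apply, mul_comm]
  have h2 : (Matrix.vandermonde x).adjugate.mulVec (fun i => F.eval (x i)) =
      (Matrix.vandermonde x).det • (fun j : Fin d => F.coeff j) := by
    rw [hv, Matrix.mulVec_mulVec, Matrix.adjugate_mul, Matrix.smul_mulVec, Matrix.one_mulVec]
  have h3 := congrFun h2 k
  simp only [Matrix.mulVec, dotProduct, Pi.smul_apply, smul_eq_mul] at h3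
  exact h3.symm

lemma det_vandermonde_sq {R : Type*} [CommRing R] {d : ℕ} (x : Fin d → R) :
    (Matrix.vandermonde x).det ^ 2 =
      ∏ q ∈ Finset.univ.filter (fun q : Fin d × Fin d => q.1 < q.2), (x q.1 - x q.2) ^ 2 := by
  rw [Matrix.det_vandermonde, Finset.prod_filter, ← Finset.univ_product_univ,
    Finset.prod_product, ← Finset.prod_pow]
  refine Finset.prod_congr rfl fun i _ => ?_
  rw [← Finset.prod_filter, ← Finset.prod_pow]
  refine Finset.prod_congr ?_ fun j _ => by ring
  ext j
  simp

/-- **Theorem 24, point 3.**  Set-up: `E/K` Galois extension of number fields,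
`C ∈ 𝓞 K [X]` monic of degree `d ≥ 2` with distinct roots `x₁,…,x_d ∈ 𝓞 E` generating
`E/K`, `Δ` its discriminant; `Ψ_s` the root-permuting polynomials, `Λ` a conjugacy class
of `Gal(E/K)` with `λ = card Λ`, and `Ω_{Λ;k}(R) = ∏_{s∈Λ}(R - Ψ_k(s))`.  Let `P` be a
prime of `𝓞 K` with `Δ ∉ P`, `p = |𝓞 K / P|`, and suppose some prime `Q` of `𝓞 E` above
`P` and some `s ∈ Λ` satisfy `s(x) ≡ x^p (mod Q)` for all `x ∈ 𝓞 E`.  If `r_k(p)` denotes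
the coefficient of `X^k` in `X^p mod C`, then `Δ^λ·Ω_{Λ;k}(r_k(p)) ∈ P`. -/
theorem conjugacy_class_polynomial_congruence
    {K E : Type*} [Field K] [NumberField K] [Field E] [NumberField E]
    [Algebra K E] [IsGalois K E]
    (d : ℕ) (hd : 2 ≤ d)
    (C : Polynomial (𝓞 K)) (hC : C.Monic) (hdeg : C.natDegree = d)
    (x : Fin d → 𝓞 E) (hxinj : Function.Injective x)
    (hsplit : C.map (algebraMap (𝓞 K) (𝓞 E)) = ∏ i, (X - Polynomial.C (x i)))
    (hgen : IntermediateField.adjoin K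
      (Set.range fun i => (algebraMap (𝓞 E) E (x i))) = ⊤)
    (Δ : 𝓞 K)
    (hΔ : algebraMap (𝓞 K) (𝓞 E) Δ =
      ∏ q ∈ Finset.univ.filter (fun q : Fin d × Fin d => q.1 < q.2), (x q.1 - x q.2) ^ 2)
    (Ψ : (E ≃ₐ[K] E) → Polynomial E)
    (hΨdeg : ∀ σ : E ≃ₐ[K] E, (Ψ σ).degree < d)
    (hΨeval : ∀ (σ : E ≃ₐ[K] E) (i : Fin d),
      (Ψ σ).eval (algebraMap (𝓞 E) E (x i)) = σ (algebraMap (𝓞 E) E (x i)))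
    (σ₀ : E ≃ₐ[K] E) (Λ : Finset (E ≃ₐ[K] E))
    (hΛ : ∀ τ : E ≃ₐ[K] E, τ ∈ Λ ↔ IsConj σ₀ τ)
    (P : Ideal (𝓞 K)) (hPprime : P.IsPrime) (hPbot : P ≠ ⊥) (hPΔ : Δ ∉ P)
    (p : ℕ) (hp : p = Nat.card (𝓞 K ⧸ P))
    (Q : Ideal (𝓞 E)) (hQprime : Q.IsPrime)
    (hQP : Ideal.comap (algebraMap (𝓞 K) (𝓞 E)) Q = P)
    (s : E ≃ₐ[K] E) (hsΛ : s ∈ Λ)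
    (hFrob : ∀ b : 𝓞 E, ∃ q ∈ Q, algebraMap (𝓞 E) E q =
      s (algebraMap (𝓞 E) E b) - (algebraMap (𝓞 E) E b) ^ p)
    (k : ℕ) (hk : k < d) :
    ∃ a : 𝓞 K, a ∈ P ∧
      algebraMap (𝓞 K) E a =
        (algebraMap (𝓞 K) E Δ) ^ Λ.card *
          (∏ t ∈ Λ, (X - Polynomial.C ((Ψ t).coeff k))).eval
            (algebraMap (𝓞 K) E ((X ^ p %ₘ C).coeff k)) := by
  classical
  have hinj : Function.Injective (algebraMap (𝓞 E) E) := RingOfIntegers.coe_injective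
  set V := Matrix.vandermonde x with hV
  have hVE : Matrix.vandermonde (fun i => algebraMap (𝓞 E) E (x i)) =
      (algebraMap (𝓞 E) E).mapMatrix V := by
    ext i j
    simp [hV, Matrix.vandermonde_apply]
  have hΔV : algebraMap (𝓞 K) (𝓞 E) Δ = V.det ^ 2 := by
    rw [hΔ, hV, det_vandermonde_sq]
  have hΔE : algebraMap (𝓞 K) E Δ = algebraMap (𝓞 E) E (V.det ^ 2) := by
    rw [← hΔV, ← IsScalarTower.algebraMap_apply]
  have hy : ∀ (t : E ≃ₐ[K] E) (b : 𝓞 E), ∃ y : 𝓞 E,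
      algebraMap (𝓞 E) E y = t (algebraMap (𝓞 E) E b) := by
    intro t b
    exact ⟨⟨t (algebraMap (𝓞 E) E b),
      (RingOfIntegers.isIntegral_coe b).map (t.toAlgHom.restrictScalars ℤ)⟩, rfl⟩
  choose y hy using hy
  let c : (E ≃ₐ[K] E) → 𝓞 E := fun t =>
    V.det * ∑ i, V.adjugate ⟨k, hk⟩ i * y t (x i)
  have hc : ∀ t, algebraMap (𝓞 E) E (c t) = algebraMap (𝓞 K) E Δ * (Ψ t).coeff k := by
    intro t
    have h := coeff_mul_det_vandermonde (fun i => algebraMap (𝓞 E) E (x i)) (Ψ t)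
      (hΨdeg t) ⟨k, hk⟩
    rw [hVE, ← RingHom.map_det, ← RingHom.map_adjugate] at h
    simp only [hΨeval] at h
    rw [hΔE, map_pow, pow_two, mul_assoc, h]
    simp only [c, map_mul, map_sum, hy]
    simp
  set r : 𝓞 K := (X ^ p %ₘ C).coeff k with hr
  set rB : 𝓞 E := algebraMap (𝓞 K) (𝓞 E) r with hrB
  have hroot : ∀ i, (C.map (algebraMap (𝓞 K) (𝓞 E))).eval (x i) = 0 := by
    intro i
    rw [hsplit, eval_prod]
    exact Finset.prod_eq_zero (Finset.mem_univ i) (by simp)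
  have hrV : V.det * rB = ∑ i, V.adjugate ⟨k, hk⟩ i * (x i) ^ p := by
    have hdg : ((X ^ p %ₘ C).map (algebraMap (𝓞 K) (𝓞 E))).degree < d := by
      refine lt_of_le_of_lt degree_map_le ?_
      refine lt_of_lt_of_le (degree_modByMonic_lt _ hC) ?_
      rw [← hdeg]
      exact degree_le_natDegree
    have h := coeff_mul_det_vandermonde x _ hdg ⟨k, hk⟩
    rw [coeff_map] at h
    rw [hrB, hr, hV, h]
    refine Finset.sum_congr rfl fun i _ => ?_
    congr 1
    have h1 := congrArg (fun G => (G.map (algebraMap (𝓞 K) (𝓞 E))).eval (x i))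
      (modByMonic_add_div (X ^ p : Polynomial (𝓞 K)) C)
    simpa [hroot i] using h1
  have hQ : algebraMap (𝓞 K) (𝓞 E) Δ * rB - c s ∈ Q := by
    have e : algebraMap (𝓞 K) (𝓞 E) Δ * rB - c s =
        V.det * ∑ i, V.adjugate ⟨k, hk⟩ i * ((x i) ^ p - y s (x i)) := by
      rw [hΔV, pow_two, mul_assoc, hrV]
      simp only [c, mul_sub, Finset.sum_sub_distrib]
    rw [e]
    refine Q.mul_mem_left _ (Q.sum_mem fun i _ => Q.mul_mem_left _ ?_)
    obtain ⟨q, hq, hqe⟩ := hFrob (x i)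
    have : (x i) ^ p - y s (x i) = -q := by
      apply hinj
      rw [map_neg, hqe, map_sub, map_pow, hy]
      ring
    rw [this]
    exact Q.neg_mem hq
  let b : 𝓞 E := ∏ t ∈ Λ, (algebraMap (𝓞 K) (𝓞 E) Δ * rB - c t)
  have hbQ : b ∈ Q := Ideal.mem_of_dvd _ (Finset.dvd_prod_of_mem _ hsΛ) hQ
  have hbE : algebraMap (𝓞 E) E b = (algebraMap (𝓞 K) E Δ) ^ Λ.card *
      ∏ t ∈ Λ, (algebraMap (𝓞 K) E r - (Ψ t).coeff k) := by
    rw [← Finset.prod_const, ← Finset.prod_mul_distrib, map_prod]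
    refine Finset.prod_congr rfl fun t _ => ?_
    rw [map_sub, hc, map_mul, hrB, ← IsScalarTower.algebraMap_apply,
      ← IsScalarTower.algebraMap_apply]
    ring
  have hperm : ∀ (σ : E ≃ₐ[K] E) (i : Fin d), ∃ j,
      σ (algebraMap (𝓞 E) E (x i)) = algebraMap (𝓞 E) E (x j) := by
    intro σ i
    have h1 : aeval (algebraMap (𝓞 E) E (x i)) (C.map (algebraMap (𝓞 K) K)) = 0 := by
      rw [aeval_map_algebraMap, aeval_algebraMap_apply, aeval_def, ← eval_map, hroot, map_zero]
    have h2 : aeval (σ (algebraMap (𝓞 E) E (x i))) (C.map (algebraMap (𝓞 K) K)) = 0 := by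
      rw [aeval_algHom_apply, h1, map_zero]
    rw [aeval_map_algebraMap, ← hy, aeval_algebraMap_apply, aeval_def, ← eval_map, hsplit,
      eval_prod, map_prod, Finset.prod_eq_zero_iff] at h2
    obtain ⟨j, -, hj⟩ := h2
    refine ⟨j, ?_⟩
    rw [← hy]
    simpa [sub_eq_zero] using hj
  have hconj : ∀ σ t : E ≃ₐ[K] E, σ ((Ψ t).coeff k) = (Ψ (σ * t * σ⁻¹)).coeff k := by
    intro σ t
    have h : (Ψ t).map (σ : E →+* E) = Ψ (σ * t * σ⁻¹) := by
      refine Polynomial.eq_of_degrees_lt_of_eval_index_eq (s := Finset.univ)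
        (v := fun i => σ (algebraMap (𝓞 E) E (x i))) ?_ ?_ ?_ ?_
      · intro i _ j _ hij
        exact hxinj (hinj (σ.injective hij))
      · simpa using hΨdeg t
      · simpa using hΨdeg (σ * t * σ⁻¹)
      · intro i _
        obtain ⟨j, hj⟩ := hperm σ i
        have e1 : ((Ψ t).map (σ : E →+* E)).eval (σ (algebraMap (𝓞 E) E (x i))) =
            σ ((Ψ t).eval (algebraMap (𝓞 E) E (x i))) :=
          eval_map_apply (f := (σ : E →+* E)) _
        rw [e1, hΨeval, hj, hΨeval, ← hj]
        simp [← AlgEquiv.mul_apply]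
    rw [← h, coeff_map]
    rfl
  have hfix : ∀ σ : E ≃ₐ[K] E, σ (algebraMap (𝓞 E) E b) = algebraMap (𝓞 E) E b := by
    intro σ
    have hK : ∀ z : 𝓞 K, σ (algebraMap (𝓞 K) E z) = algebraMap (𝓞 K) E z := by
      intro z
      rw [IsScalarTower.algebraMap_apply (𝓞 K) K E, σ.commutes]
    rw [hbE, map_mul, map_pow, hK, map_prod]
    congr 1
    refine Finset.prod_bij (fun t _ => σ * t * σ⁻¹) ?_ ?_ ?_ ?_
    · intro t ht
      rw [hΛ] at ht ⊢
      exact ht.trans (isConj_iff.2 ⟨σ, rfl⟩)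
    · intro t _ t' _ h
      simpa using h
    · intro t ht
      refine ⟨σ⁻¹ * t * σ, ?_, by group⟩
      rw [hΛ] at ht ⊢
      exact ht.trans (isConj_iff.2 ⟨σ⁻¹, by simp⟩)
    · intro t _
      rw [map_sub, hK, hconj]
  obtain ⟨z, hz⟩ := IntermediateField.mem_bot.1 ((IsGalois.mem_bot_iff_fixed _).2 hfix)
  have hzint : IsIntegral ℤ z := by
    have : IsIntegral ℤ (algebraMap K E z) := by
      rw [hz]
      exact RingOfIntegers.isIntegral_coe b
    exact (isIntegral_algebraMap_iff (algebraMap K E).injective).1 this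
  obtain ⟨a, ha⟩ : ∃ a : 𝓞 K, algebraMap (𝓞 K) K a = z := ⟨⟨z, hzint⟩, rfl⟩
  have haE : algebraMap (𝓞 K) E a = algebraMap (𝓞 E) E b := by
    rw [← hz, IsScalarTower.algebraMap_apply (𝓞 K) K E, ha]
  refine ⟨a, ?_, ?_⟩
  · rw [← hQP, Ideal.mem_comap]
    have : algebraMap (𝓞 K) (𝓞 E) a = b := by
      apply hinj
      rw [← haE, ← IsScalarTower.algebraMap_apply]
    rw [this]
    exact hbQ
  · rw [haE, hbE, eval_prod]
    simp
end

section
/- Let K be a number field with ring of integers A, let u, v ∈ A, set Δ := −4u³ − 27v², and let P be a prime ideal of A with Δ ∉ P. For (a, b, c) ∈ A³ consider the three systems of congruences: S₁: a ∈ P, b − 1 ∈ P, c ∈ P; S₃: Δa² − 9u² ∈ P, Δ(b² + b) − (u³ + 27v²) ∈ P, Δc² − 4u⁴ ∈ P; S₂: Δa³ − 9u²a − 27v ∈ P, Δb³ + 3u³b − u³ ∈ P, Δc³ − 4u⁴c − 8u³v ∈ P. Then for every (a, b, c) ∈ A³ and every pair of distinct indices f ≠ f' in {1, 2, 3}, the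 systems S_f and S_{f'} cannot hold simultaneously. -/
open NumberField

/-- The three systems are pairwise incompatible in an integral domain where `d ≠ 0`. -/
theorem systems_exclusive_in_domain {R : Type*} [CommRing R] [IsDomain R]
    (u v d : R) (hd : d = -4 * u ^ 3 - 27 * v ^ 2) (hne : d ≠ 0) (a b c : R) :
    ¬ ((a = 0 ∧ b - 1 = 0 ∧ c = 0) ∧
       (d * a ^ 2 - 9 * u ^ 2 = 0 ∧
        d * (b ^ 2 + b) - (u ^ 3 + 27 * v ^ 2) = 0 ∧
        d * c ^ 2 - 4 * u ^ 4 = 0)) ∧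
    ¬ ((a = 0 ∧ b - 1 = 0 ∧ c = 0) ∧
       (d * a ^ 3 - 9 * u ^ 2 * a - 27 * v = 0 ∧
        d * b ^ 3 + 3 * u ^ 3 * b - u ^ 3 = 0 ∧
        d * c ^ 3 - 4 * u ^ 4 * c - 8 * u ^ 3 * v = 0)) ∧
    ¬ ((d * a ^ 2 - 9 * u ^ 2 = 0 ∧
        d * (b ^ 2 + b) - (u ^ 3 + 27 * v ^ 2) = 0 ∧
        d * c ^ 2 - 4 * u ^ 4 = 0) ∧
       (d * a ^ 3 - 9 * u ^ 2 * a - 27 * v = 0 ∧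
        d * b ^ 3 + 3 * u ^ 3 * b - u ^ 3 = 0 ∧
        d * c ^ 3 - 4 * u ^ 4 * c - 8 * u ^ 3 * v = 0)) := by
  refine ⟨?_, ?_, ?_⟩
  · rintro ⟨⟨rfl, hb, rfl⟩, h1, h2, h3⟩
    obtain rfl : b = 1 := sub_eq_zero.mp hb
    -- `u ^ 4 = 9 u ^ 4 - 2 * (4 u ^ 4) = 0`
    have hu4 : u ^ 4 = 0 := by linear_combination -u ^ 2 * h1 + 2 * h3
    have hu : u = 0 := pow_eq_zero_iff (by norm_num) |>.mp hu4
    subst hu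
    have h3d : (3 : R) * d = 0 := by linear_combination h2 + hd
    rcases mul_eq_zero.mp h3d with h | h
    · exact hne (by linear_combination hd - 9 * v ^ 2 * h)
    · exact hne h
  · rintro ⟨⟨rfl, hb, rfl⟩, h1, h2, h3⟩
    obtain rfl : b = 1 := sub_eq_zero.mp hb
    exact hne (by linear_combination 2 * h2 - hd - v * h1)
  · rintro ⟨⟨h1, h2, -⟩, h4, h5, -⟩
    have hv : 27 * v = 0 := by linear_combination a * h1 - h4
    have hd' : d = -4 * u ^ 3 := by linear_combination hd - v * hv
    have hsq : d * (2 * b + 1) ^ 2 = 0 := by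
      linear_combination 4 * h2 + 4 * v * hv + hd'
    have hb : 2 * b + 1 = 0 :=
      pow_eq_zero_iff (by norm_num) |>.mp ((mul_eq_zero.mp hsq).resolve_left hne)
    have hc : d * (4 * b ^ 3 - 3 * b + 1) = 0 := by
      linear_combination 4 * h5 + (1 - 3 * b) * hd'
    have hc' := (mul_eq_zero.mp hc).resolve_left hne
    have h4 : (4 : R) = 0 := by
      linear_combination 2 * hc' - (4 * b ^ 2 - 2 * b - 2) * hb
    exact hne (by linear_combination hd' - u ^ 3 * h4)

/-- **Proposition 26 (the three congruence systems are mutually exclusive).**  Let `K` be a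
number field with ring of integers `A = 𝓞 K`, `u, v ∈ A`, `Δ = -4u³ - 27v²`, and `P` a
prime of `A` with `Δ ∉ P`.  For `(a, b, c) ∈ A³` consider the systems
`S₁ : a ∈ P, b - 1 ∈ P, c ∈ P`;
`S₃ : Δa² - 9u² ∈ P, Δ(b² + b) - (u³ + 27v²) ∈ P, Δc² - 4u⁴ ∈ P`;
`S₂ : Δa³ - 9u²a - 27v ∈ P, Δb³ + 3u³b - u³ ∈ P, Δc³ - 4u⁴c - 8u³v ∈ P`.
Then no two distinct systems can hold simultaneously. -/
theorem cubic_congruence_systems_mutually_exclusive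
    {K : Type*} [Field K] [NumberField K]
    (u v : 𝓞 K) (Δ : 𝓞 K) (hΔdef : Δ = -4 * u ^ 3 - 27 * v ^ 2)
    (P : Ideal (𝓞 K)) (hPprime : P.IsPrime) (hPΔ : Δ ∉ P)
    (a b c : 𝓞 K) :
    ¬ ((a ∈ P ∧ b - 1 ∈ P ∧ c ∈ P) ∧
       (Δ * a ^ 2 - 9 * u ^ 2 ∈ P ∧
        Δ * (b ^ 2 + b) - (u ^ 3 + 27 * v ^ 2) ∈ P ∧
        Δ * c ^ 2 - 4 * u ^ 4 ∈ P)) ∧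
    ¬ ((a ∈ P ∧ b - 1 ∈ P ∧ c ∈ P) ∧
       (Δ * a ^ 3 - 9 * u ^ 2 * a - 27 * v ∈ P ∧
        Δ * b ^ 3 + 3 * u ^ 3 * b - u ^ 3 ∈ P ∧
        Δ * c ^ 3 - 4 * u ^ 4 * c - 8 * u ^ 3 * v ∈ P)) ∧
    ¬ ((Δ * a ^ 2 - 9 * u ^ 2 ∈ P ∧
        Δ * (b ^ 2 + b) - (u ^ 3 + 27 * v ^ 2) ∈ P ∧
        Δ * c ^ 2 - 4 * u ^ 4 ∈ P) ∧
       (Δ * a ^ 3 - 9 * u ^ 2 * a - 27 * v ∈ P ∧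
        Δ * b ^ 3 + 3 * u ^ 3 * b - u ^ 3 ∈ P ∧
        Δ * c ^ 3 - 4 * u ^ 4 * c - 8 * u ^ 3 * v ∈ P)) := by
  have hdom : IsDomain (𝓞 K ⧸ P) := Ideal.Quotient.isDomain P
  have key := systems_exclusive_in_domain (R := 𝓞 K ⧸ P)
    (Ideal.Quotient.mk P u) (Ideal.Quotient.mk P v) (Ideal.Quotient.mk P Δ)
    (by rw [hΔdef]; simp only [map_sub, map_mul, map_neg, map_pow, map_ofNat])
    (fun h => hPΔ (Ideal.Quotient.eq_zero_iff_mem.mp h))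
    (Ideal.Quotient.mk P a) (Ideal.Quotient.mk P b) (Ideal.Quotient.mk P c)
  simp only [← Ideal.Quotient.eq_zero_iff_mem, map_sub, map_add, map_mul, map_pow, map_one,
    map_ofNat]
  exact key
end
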